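/- Uniform distance of minimizing motions from collisions: for every x̄ ∈ Ω there exist an open neighborhood 𝒰 ⊂ Ω of x̄ and a constant C > 0 such that for every x ∈ 𝒰 and every minimizer φ of A_x on D_0^{1,2}(1,+∞), the motion γ(t) = a t + φ(t) + x − a satisfies inf_{y ∈ Δ} ‖γ(t) − y‖_M ≥ C for all t ∈ [1, +∞). -/

import Mathlib

open MeasureTheory Real Set Filter Topology
open scoped RealInnerProductSpace ENNReal

noncomputable section
namespace NBodyHJ

attribute [local instance] Classical.propDecidable

abbrev Conf (d N : ℕ) := Fin N → EuclideanSpace ℝ (Fin d)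

variable {d N : ℕ}

/-- The mass inner product on the configuration space. -/
def minner (m : Fin N → ℝ) (x y : Conf d N) : ℝ := ∑ i, m i * ⟪x i, y i⟫

/-- The mass norm on the configuration space. -/
def mnorm (m : Fin N → ℝ) (x : Conf d N) : ℝ := Real.sqrt (minner m x x)

/-- Membership in the zero-barycenter configuration space `X`. -/
def inX (m : Fin N → ℝ) (x : Conf d N) : Prop := ∑ i, m i • x i = 0

/-- Collision configurations. -/
def collision (x : Conf d N) : Prop := ∃ i j, i ≠ j ∧ x i = x j

/-- Membership in the collision-free zero-barycenter space `Ω`. -/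
def inOmega (m : Fin N → ℝ) (x : Conf d N) : Prop := inX m x ∧ ¬ collision x

/-- The Newtonian potential (with junk value `0` for a colliding pair). -/
def U (m : Fin N → ℝ) (x : Conf d N) : ℝ :=
  ∑ i : Fin N, ∑ j : Fin N, if i < j then m i * m j / ‖x i - x j‖ else 0

/-- The time interval `(t₀, T)`, where `T ∈ (t₀, +∞]` is extended-real. -/
def timeSet (t0 : ℝ) (T : EReal) : Set ℝ := {t : ℝ | t0 < t ∧ (t : EReal) < T}

/-- Membership of the pair (curve, derivative) `(φ, φ')` in `D₀^{1,2}(t₀, T)`: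
`φ` starts at `0`, takes values in `X`, is the integral of `φ'` (hence locally
absolutely continuous), and `φ'` has finite `L²` mass norm on `(t₀, T)`. -/
def InD (m : Fin N → ℝ) (t0 : ℝ) (T : EReal) (φ φ' : ℝ → Conf d N) : Prop :=
  φ t0 = 0 ∧
  (∀ t : ℝ, t0 ≤ t → (t : EReal) < T → inX m (φ t)) ∧
  (∀ t : ℝ, t0 ≤ t → (t : EReal) < T → φ t = ∫ s in Set.Ioc t0 t, φ' s) ∧
  (∀ t : ℝ, t0 ≤ t → (t : EReal) < T → IntegrableOn φ' (Set.Ioc t0 t)) ∧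
  IntegrableOn (fun t => (mnorm m (φ' t)) ^ 2) (timeSet t0 T)

/-- The norm `‖φ‖_{D_T}`. -/
def Dnorm (m : Fin N → ℝ) (t0 : ℝ) (T : EReal) (φ' : ℝ → Conf d N) : ℝ :=
  Real.sqrt (∫ t in timeSet t0 T, (mnorm m (φ' t)) ^ 2)

/-- The motion `γ(t) = φ(t) + t a + x - a` associated with `φ` in the hyperbolic case. -/
def hypCurve (a x : Conf d N) (φ : ℝ → Conf d N) (t : ℝ) : Conf d N :=
  φ t + t • a + x - a

/-- The integrand of the hyperbolic renormalized Lagrangian action. -/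
def hypIntegrand (m : Fin N → ℝ) (a x : Conf d N) (φ φ' : ℝ → Conf d N) (t : ℝ) : ℝ :=
  (mnorm m (φ' t)) ^ 2 / 2 + U m (hypCurve a x φ t) - U m (t • a)

/-- The hyperbolic renormalized Lagrangian action `A_{x,[1,T]}(φ)`, with values in
`ℝ ∪ {+∞}` : it equals the integral of the renormalized Lagrangian if this integrand is
integrable and the motion is a.e. collision-free, and `+∞` otherwise. -/
def hypAction (m : Fin N → ℝ) (a x : Conf d N) (T : EReal) (φ φ' : ℝ → Conf d N) : EReal :=
  if IntegrableOn (hypIntegrand m a x φ φ') (timeSet 1 T) ∧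
      (∀ᵐ t ∂volume.restrict (timeSet 1 T), ¬ collision (hypCurve a x φ t))
  then ((∫ t in timeSet 1 T, hypIntegrand m a x φ φ' t : ℝ) : EReal)
  else (⊤ : EReal)

/-- The infimum of the hyperbolic renormalized action over `D₀^{1,2}(1,T)`. -/
def hypInf (m : Fin N → ℝ) (a x : Conf d N) (T : EReal) : EReal :=
  ⨅ (φ : ℝ → Conf d N) (φ' : ℝ → Conf d N) (_ : InD m 1 T φ φ'), hypAction m a x T φ φ'

/-- The renormalized value function `v(x)` in the hyperbolic case. -/
def hypValue (m : Fin N → ℝ) (a x : Conf d N) : ℝ :=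
  (hypInf m a x ⊤).toReal - minner m a x

/-! The action of a minimizer is bounded, uniformly near `x̄`, by that of a competitor which is
pushed off the collisions along a generic direction. Since `φ` grows at most like `√t`, the
potential `U(γ) - U(a t)` is bounded below by an integrable function of size `t ^ (-3 / 2)`, so a
bound on the action bounds the kinetic energy, and also the potential energy on bounded time
intervals.

The kinetic bound makes `γ` Hölder-`1/2`, which separates the particles for `t` close to `1`. At a
later time `t₀`, suppose that two particles come very close. By a pigeonhole argument over
geometric scales they stay within `η √s` of each other during some interval `[t₀, t₀ + s]`. Vary
`γ` by `± f ξ`, where `f` is a tent function around `t₀` and `ξ` moves all particles along one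
line. By minimality the potential energy cannot drop at second order by more than the kinetic cost
`κ ‖ξ‖ ^ 2`. Now average over a law of `ξ` carried by a plane: it does not increase any `1 / |r|`
on average, by inversion and rearrangement, and it strictly decreases the terms of the close pair.
The gain is of order `s / h` and the losses of order `h` when `h` is comparable to `η √s`, which
for small `η` is a contradiction.
-/

section Rearrangement

variable {E : Type*} [NormedAddCommGroup E] [MeasurableSpace E] [BorelSpace E]

lemma setLIntegral_comp_norm_le_ball {μ : Measure E} {g : ℝ → ℝ≥0∞} (hg : Antitone g) {R : ℝ}
    {s : Set E} (hs : MeasurableSet s) (hμs : μ s ≤ μ (Metric.ball 0 R)) (hfin : μ s ≠ ∞) :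
    ∫⁻ p in s, g ‖p‖ ∂μ ≤ ∫⁻ p in Metric.ball 0 R, g ‖p‖ ∂μ := by
  set B : Set E := Metric.ball 0 R
  have hB : MeasurableSet B := Metric.isOpen_ball.measurableSet
  have hdiff : μ (s \ B) ≤ μ (B \ s) := by
    have hinter : μ (s ∩ B) ≠ ∞ := ne_top_of_le_ne_top hfin (measure_mono inter_subset_left)
    rw [← ENNReal.add_le_add_iff_left hinter, measure_inter_add_sdiff s hB, inter_comm,
      measure_inter_add_sdiff B hs]
    exact hμs
  calc ∫⁻ p in s, g ‖p‖ ∂μ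
      = ∫⁻ p in s ∩ B, g ‖p‖ ∂μ + ∫⁻ p in s \ B, g ‖p‖ ∂μ := (lintegral_inter_add_sdiff _ _ hB).symm
    _ ≤ ∫⁻ p in s ∩ B, g ‖p‖ ∂μ + ∫⁻ _ in s \ B, g R ∂μ := by
        refine add_le_add le_rfl (setLIntegral_mono' (hs.diff hB) fun p hp => hg ?_)
        exact not_lt.1 fun h => hp.2 (mem_ball_zero_iff.2 h)
    _ ≤ ∫⁻ p in B ∩ s, g ‖p‖ ∂μ + ∫⁻ _ in B \ s, g R ∂μ := by
        simp only [lintegral_const, Measure.restrict_apply_univ, inter_comm B s]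
        gcongr
    _ ≤ ∫⁻ p in B ∩ s, g ‖p‖ ∂μ + ∫⁻ p in B \ s, g ‖p‖ ∂μ := by
        refine add_le_add le_rfl (setLIntegral_mono' (hB.diff hs) fun p hp => hg ?_)
        exact (mem_ball_zero_iff.1 hp.1).le
    _ = ∫⁻ p in B, g ‖p‖ ∂μ := lintegral_inter_add_sdiff _ _ hs

lemma setLIntegral_ball_comp_norm_add_le [NormedSpace ℝ E] [FiniteDimensional ℝ E] (μ : Measure E)
    [μ.IsAddHaarMeasure] {g : ℝ → ℝ≥0∞} (hg : Antitone g) (R : ℝ) (v : E) :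
    ∫⁻ p in Metric.ball 0 R, g ‖p + v‖ ∂μ ≤ ∫⁻ p in Metric.ball 0 R, g ‖p‖ ∂μ := by
  have hball : Metric.ball (0 : E) R = (· + v) ⁻¹' Metric.ball v R := by
    ext p; simp
  calc ∫⁻ p in Metric.ball 0 R, g ‖p + v‖ ∂μ = ∫⁻ p in Metric.ball v R, g ‖p‖ ∂μ := by
        rw [hball]
        exact (measurePreserving_add_right μ v).setLIntegral_comp_preimage_emb
          (measurableEmbedding_addRight v) (fun p => g ‖p‖) _
    _ ≤ ∫⁻ p in Metric.ball 0 R, g ‖p‖ ∂μ :=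
        setLIntegral_comp_norm_le_ball hg Metric.isOpen_ball.measurableSet
          (Measure.addHaar_ball_center μ v R).le measure_ball_lt_top.ne

end Rearrangement

lemma lintegral_comp_norm_complex {g : ℝ → ℝ≥0∞} (hg : Measurable g) :
    ∫⁻ p : ℂ, g ‖p‖ = ENNReal.ofReal (2 * π) * ∫⁻ r in Ioi 0, ENNReal.ofReal r * g r := by
  rw [← Complex.lintegral_comp_polarCoord_symm]
  have h1 : ∫⁻ q in polarCoord.target, ENNReal.ofReal q.1 • g ‖Complex.polarCoord.symm q‖ =
      ∫⁻ q in Ioi 0 ×ˢ Ioo (-π) π, ENNReal.ofReal q.1 * g q.1 := by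
    refine setLIntegral_congr_fun (measurableSet_Ioi.prod measurableSet_Ioo) fun q hq => ?_
    simp only [Complex.norm_polarCoord_symm, abs_of_pos hq.1.out, smul_eq_mul]
  rw [h1, Measure.volume_eq_prod, ← Measure.prod_restrict, lintegral_prod _ (by fun_prop)]
  simp only [lintegral_const, Measure.restrict_apply_univ, Real.volume_Ioo]
  rw [lintegral_mul_const _ (by fun_prop), mul_comm]
  congr 2; ring

lemma setLIntegral_comp_norm_complex {g : ℝ → ℝ≥0∞} (hg : Measurable g) {T : Set ℝ}
    (hT : MeasurableSet T) :
    ∫⁻ p in (‖·‖) ⁻¹' T, g ‖(p : ℂ)‖ =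
      ENNReal.ofReal (2 * π) * ∫⁻ r in T ∩ Ioi 0, ENNReal.ofReal r * g r := by
  have hind : ((‖·‖) ⁻¹' T).indicator (fun p : ℂ => g ‖p‖) = fun p => T.indicator g ‖p‖ :=
    funext fun p => indicator_comp_right (g := g) (x := p) (fun p : ℂ => ‖p‖)
  rw [← lintegral_indicator (measurable_norm hT), hind,
    lintegral_comp_norm_complex (hg.indicator hT), ← setLIntegral_indicator hT]
  simp only [indicator_mul_right]

lemma setLIntegral_enorm_inv_ball (R : ℝ) :
    ∫⁻ p in Metric.ball (0 : ℂ) R, ‖p‖ₑ⁻¹ = ENNReal.ofReal (2 * π * R) := by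
  have hball : Metric.ball (0 : ℂ) R = (‖·‖) ⁻¹' Iio R := by ext; simp
  have hone : ∀ r ∈ Iio R ∩ Ioi 0, ENNReal.ofReal r * (ENNReal.ofReal r)⁻¹ = 1 := fun r hr =>
    ENNReal.mul_inv_cancel (ENNReal.ofReal_pos.2 hr.2).ne' ENNReal.ofReal_ne_top
  simp only [← ofReal_norm]
  rw [hball, setLIntegral_comp_norm_complex (g := fun r => (ENNReal.ofReal r)⁻¹) (by fun_prop)
    measurableSet_Iio, setLIntegral_congr_fun (measurableSet_Iio.inter measurableSet_Ioi) hone,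
    inter_comm, Ioi_inter_Iio, ENNReal.ofReal_mul (by positivity : 0 ≤ 2 * π)]
  simp only [lintegral_one, Measure.restrict_apply_univ, Real.volume_Ioo, sub_zero]

lemma enorm_inv_mul_enorm_inv {E F : Type*} [SeminormedAddGroup E] [SeminormedAddGroup F]
    (x : E) (y : F) : ‖x‖ₑ⁻¹ * ‖y‖ₑ⁻¹ = (ENNReal.ofReal (‖x‖ * ‖y‖))⁻¹ := by
  rw [← ENNReal.mul_inv (.inr enorm_ne_top) (.inl enorm_ne_top), ← ofReal_norm, ← ofReal_norm,
    ← ENNReal.ofReal_mul (norm_nonneg _)]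

section InversionMeasure

variable {V : Type*} [NormedAddCommGroup V] [InnerProductSpace ℝ V]

lemma exists_linearIsometry_complex (h : 2 ≤ Module.finrank ℝ V) : Nonempty (ℂ →ₗᵢ[ℝ] V) := by
  have : FiniteDimensional ℝ V := Module.finite_of_finrank_pos (by lia)
  let e := Complex.orthonormalBasisOneI
  let u : Fin 2 → V := stdOrthonormalBasis ℝ V ∘ Fin.castLE h
  have hu : Orthonormal ℝ u :=
    (stdOrthonormalBasis ℝ V).orthonormal.comp _ (Fin.castLE_injective h)
  have he : Orthonormal ℝ (e.toBasis.constr ℝ u ∘ e.toBasis) := by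
    rwa [show e.toBasis.constr ℝ u ∘ e.toBasis = u from funext (e.toBasis.constr_basis ℝ u)]
  exact ⟨(e.toBasis.constr ℝ u).isometryOfOrthonormal (by simp [e.orthonormal]) he⟩

lemma exists_norm_mul_norm_add_le [CompleteSpace V] (ι : ℂ →ₗᵢ[ℝ] V) {y : V}
    (hy : y ≠ 0) (f : ℝ) :
    ∃ v : ℂ, ∀ p : ℂ, p ≠ 0 → ‖y‖ * ‖p + v‖ ≤ ‖p‖ * ‖y + f • ι ((‖p‖ ^ 2)⁻¹ • p)‖ := by
  let w : ℂ := ι.toContinuousLinearMap.adjoint y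
  have hw : ‖w‖ ≤ ‖y‖ := (ι.toContinuousLinearMap.adjoint.le_opNorm y).trans <| by
    rw [LinearIsometryEquiv.norm_map]
    exact mul_le_of_le_one_left (norm_nonneg _) ι.norm_toContinuousLinearMap_le
  have hinner : ∀ p, ⟪p, w⟫ = ⟪y, ι p⟫ := fun p => by
    rw [ContinuousLinearMap.adjoint_inner_right, real_inner_comm]
    rfl
  have hy0 : 0 < ‖y‖ := norm_pos_iff.2 hy
  refine ⟨(f / ‖y‖ ^ 2) • w, fun p hp => ?_⟩
  have : 0 < ‖p‖ := norm_pos_iff.2 hp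
  refine abs_le_of_sq_le_sq' ?_ (by positivity) |>.2
  calc (‖y‖ * ‖p + (f / ‖y‖ ^ 2) • w‖) ^ 2
      = ‖y‖ ^ 2 * ‖p‖ ^ 2 + 2 * f * ⟪p, w⟫ + f ^ 2 * (‖w‖ / ‖y‖) ^ 2 := by
        rw [mul_pow, norm_add_sq_real, real_inner_smul_right, norm_smul, norm_eq_abs, mul_pow,
          sq_abs]
        field_simp
    _ ≤ ‖y‖ ^ 2 * ‖p‖ ^ 2 + 2 * f * ⟪y, ι p⟫ + f ^ 2 * 1 := by
        rw [hinner]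
        gcongr
        exact pow_le_one₀ (by positivity) ((div_le_one hy0).2 hw)
    _ = (‖p‖ * ‖y + f • ι ((‖p‖ ^ 2)⁻¹ • p)‖) ^ 2 := by
        rw [mul_pow, norm_add_sq_real, map_smul, smul_smul, real_inner_smul_right, norm_smul,
          norm_eq_abs, mul_pow, sq_abs, ι.norm_map]
        field_simp

lemma quarter_le_norm_mul_norm_add (ι : ℂ →ₗᵢ[ℝ] V) {h f : ℝ} {p : ℂ} {y : V} (hp : 0 < ‖p‖)
    (hph : ‖p‖ ≤ h⁻¹) (hf : 1 / 2 ≤ |f|) (hy : ‖y‖ ≤ h / 4) :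
    1 / 4 ≤ ‖p‖ * ‖y + f • ι ((‖p‖ ^ 2)⁻¹ • p)‖ := by
  have hh : 0 < h := inv_pos.1 (hp.trans_le hph)
  have hfξ : ‖f • ι ((‖p‖ ^ 2)⁻¹ • p)‖ = |f| / ‖p‖ := by
    rw [norm_smul, ι.norm_map, norm_smul, norm_inv, norm_pow, norm_norm, Real.norm_eq_abs]
    field_simp
  have hpy : ‖p‖ * ‖y‖ ≤ 1 / 4 := by
    calc ‖p‖ * ‖y‖ ≤ h⁻¹ * (h / 4) := by gcongr
      _ = 1 / 4 := by field_simp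
  calc 1 / 4 ≤ ‖p‖ * (|f| / ‖p‖ - ‖y‖) := by
        rw [mul_sub, mul_div_cancel₀ _ hp.ne']; linarith
    _ ≤ ‖p‖ * ‖y + f • ι ((‖p‖ ^ 2)⁻¹ • p)‖ := by
        gcongr
        rw [← hfξ, add_comm]
        exact norm_sub_le_norm_add _ _

variable [MeasurableSpace V] [BorelSpace V] (ι : ℂ →ₗᵢ[ℝ] V) {h : ℝ}

/-- The law of `ξ = ι (p / ‖p‖²)` when `p ∈ ℂ` has density `h / (2π‖p‖)` on the annulus
`1 < ‖p‖ < h⁻¹`. It has mass `1 - h`. Directions are averaged against it because inversion turns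
`‖y + f • ξ‖⁻¹` into a translate of the kernel `‖p‖⁻¹` of the plane. -/
def inversionMeasure (ι : ℂ →ₗᵢ[ℝ] V) (h : ℝ) : Measure V :=
  (ENNReal.ofReal (h / (2 * π)) •
    (volume.restrict ((‖·‖) ⁻¹' Ioo 1 h⁻¹)).withDensity fun p : ℂ => ‖p‖ₑ⁻¹).map
      fun p => ι ((‖p‖ ^ 2)⁻¹ • p)

lemma lintegral_inversionMeasure {F : V → ℝ≥0∞} (hF : Measurable F) :
    ∫⁻ ξ, F ξ ∂inversionMeasure ι h = ENNReal.ofReal (h / (2 * π)) *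
      ∫⁻ p in (‖·‖) ⁻¹' Ioo 1 h⁻¹, ‖p‖ₑ⁻¹ * F (ι ((‖p‖ ^ 2)⁻¹ • p)) := by
  have hinv : Measurable fun p : ℂ => ι ((‖p‖ ^ 2)⁻¹ • p) :=
    ι.continuous.measurable.comp (by fun_prop)
  rw [inversionMeasure, lintegral_map hF hinv, lintegral_smul_measure, smul_eq_mul]
  congr 1
  exact lintegral_withDensity_eq_lintegral_mul _ (by fun_prop) (hF.comp hinv)

lemma lintegral_comp_norm_inversionMeasure (hh : 0 < h) {g : ℝ → ℝ≥0∞} (hg : Measurable g) :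
    ∫⁻ ξ, g ‖ξ‖ ∂inversionMeasure ι h = ENNReal.ofReal h * ∫⁻ r in Ioo 1 h⁻¹, g r⁻¹ := by
  have hnorm : ∀ p : ℂ, ‖ι ((‖p‖ ^ 2)⁻¹ • p)‖ = ‖p‖⁻¹ := fun p => by
    rcases eq_or_ne p 0 with rfl | hp
    · simp
    · rw [ι.norm_map, norm_smul, norm_inv, norm_pow, norm_norm]
      field_simp
  have hcancel : ∀ r ∈ Ioo 1 h⁻¹, ENNReal.ofReal r * ((ENNReal.ofReal r)⁻¹ * g r⁻¹) = g r⁻¹ :=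
    fun r hr => ENNReal.mul_inv_cancel_left (ENNReal.ofReal_pos.2 (one_pos.trans hr.1)).ne'
      ENNReal.ofReal_ne_top
  have hpos : Ioo 1 h⁻¹ ∩ Ioi 0 = Ioo 1 h⁻¹ :=
    inter_eq_left.2 fun r hr => one_pos.trans hr.1
  rw [lintegral_inversionMeasure ι (F := fun ξ => g ‖ξ‖) (by fun_prop)]
  simp only [hnorm, ← ofReal_norm]
  rw [setLIntegral_comp_norm_complex (g := fun r => (ENNReal.ofReal r)⁻¹ * g r⁻¹) (by fun_prop)
    measurableSet_Ioo, ← mul_assoc, ← ENNReal.ofReal_mul (by positivity),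
    div_mul_cancel₀ _ (by positivity), hpos,
    setLIntegral_congr_fun measurableSet_Ioo hcancel]

lemma inversionMeasure_univ (hh : 0 < h) :
    inversionMeasure ι h univ = ENNReal.ofReal (1 - h) := by
  rw [← lintegral_one, lintegral_comp_norm_inversionMeasure ι hh (g := fun _ => 1) (by fun_prop),
    lintegral_one, Measure.restrict_apply_univ, Real.volume_Ioo, ← ENNReal.ofReal_mul hh.le,
    mul_sub, mul_inv_cancel₀ hh.ne', mul_one]

lemma lintegral_sq_norm_inversionMeasure_le (hh : 0 < h) :
    ∫⁻ ξ, ENNReal.ofReal (‖ξ‖ ^ 2) ∂inversionMeasure ι h ≤ ENNReal.ofReal h := by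
  rw [lintegral_comp_norm_inversionMeasure ι hh (g := fun r => ENNReal.ofReal (r ^ 2))
    (by fun_prop)]
  refine mul_le_of_le_one_right' ?_
  have hint : IntegrableOn (fun r : ℝ => r ^ (-2 : ℝ)) (Ioi 1) :=
    integrableOn_Ioi_rpow_of_lt (by norm_num) one_pos
  calc ∫⁻ r in Ioo 1 h⁻¹, ENNReal.ofReal (r⁻¹ ^ 2)
      ≤ ∫⁻ r in Ioi 1, ENNReal.ofReal (r⁻¹ ^ 2) := lintegral_mono_set Ioo_subset_Ioi_self
    _ = ∫⁻ r in Ioi (1 : ℝ), ENNReal.ofReal (r ^ (-2 : ℝ)) :=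
        setLIntegral_congr_fun measurableSet_Ioi fun r hr => by
          rw [rpow_neg (one_pos.trans hr).le, rpow_ofNat, inv_pow]
    _ = ENNReal.ofReal (∫ r in Ioi (1 : ℝ), r ^ (-2 : ℝ)) :=
        (ofReal_integral_eq_lintegral_ofReal hint <| (ae_restrict_mem measurableSet_Ioi).mono
          fun r hr => rpow_nonneg (one_pos.trans hr).le _).symm
    _ = 1 := by rw [integral_Ioi_rpow_of_lt (by norm_num) one_pos]; norm_num

lemma lintegral_enorm_add_inv_inversionMeasure_le [CompleteSpace V] (hh : 0 < h) (f : ℝ) (y : V) :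
    ∫⁻ ξ, ‖y + f • ξ‖ₑ⁻¹ ∂inversionMeasure ι h ≤ ‖y‖ₑ⁻¹ := by
  rcases eq_or_ne y 0 with rfl | hy
  · simp
  obtain ⟨v, hv⟩ := exists_norm_mul_norm_add_le ι hy f
  have hpoint : ∀ p ∈ (‖·‖) ⁻¹' Ioo 1 h⁻¹,
      ‖p‖ₑ⁻¹ * ‖y + f • ι ((‖p‖ ^ 2)⁻¹ • p)‖ₑ⁻¹ ≤ ‖y‖ₑ⁻¹ * ‖p + v‖ₑ⁻¹ := fun p hp => by
    rw [enorm_inv_mul_enorm_inv, enorm_inv_mul_enorm_inv]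
    exact ENNReal.inv_le_inv.2 (ENNReal.ofReal_le_ofReal
      (hv p (norm_pos_iff.1 (one_pos.trans hp.1))))
  have hsub : (‖·‖) ⁻¹' Ioo 1 h⁻¹ ⊆ Metric.ball (0 : ℂ) h⁻¹ := fun p hp =>
    mem_ball_zero_iff.2 hp.2
  have hanti : Antitone fun r => (ENNReal.ofReal r)⁻¹ := fun r s hrs =>
    ENNReal.inv_le_inv.2 (ENNReal.ofReal_le_ofReal hrs)
  have hball : ∫⁻ p in Metric.ball (0 : ℂ) h⁻¹, ‖p + v‖ₑ⁻¹ ≤ ENNReal.ofReal (2 * π * h⁻¹) := by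
    rw [← setLIntegral_enorm_inv_ball]
    simpa only [ofReal_norm] using setLIntegral_ball_comp_norm_add_le volume hanti h⁻¹ v
  rw [lintegral_inversionMeasure ι (F := fun ξ => ‖y + f • ξ‖ₑ⁻¹) (by fun_prop)]
  calc _ ≤ ENNReal.ofReal (h / (2 * π)) *
        ∫⁻ p in (‖·‖) ⁻¹' Ioo 1 h⁻¹, ‖y‖ₑ⁻¹ * ‖p + v‖ₑ⁻¹ := by
        exact mul_le_mul_right (setLIntegral_mono' (measurable_norm measurableSet_Ioo) hpoint) _
    _ ≤ ENNReal.ofReal (h / (2 * π)) * (‖y‖ₑ⁻¹ * ENNReal.ofReal (2 * π * h⁻¹)) := by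
        rw [lintegral_const_mul _ (by fun_prop)]
        gcongr
        exact (lintegral_mono_set hsub).trans hball
    _ = ‖y‖ₑ⁻¹ := by
        rw [mul_left_comm, ← ENNReal.ofReal_mul (by positivity),
          show h / (2 * π) * (2 * π * h⁻¹) = 1 by field_simp, ENNReal.ofReal_one, mul_one]

lemma lintegral_enorm_add_inv_inversionMeasure_add_le (hh : 0 < h) {f : ℝ}
    (hf : 1 / 2 ≤ |f|) {y : V} (hy : ‖y‖ ≤ h / 4) :
    ∫⁻ ξ, ‖y + f • ξ‖ₑ⁻¹ ∂inversionMeasure ι h + ENNReal.ofReal (2 / h) ≤ ‖y‖ₑ⁻¹ := by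
  have hpoint : ∀ p ∈ (‖·‖) ⁻¹' Ioo 1 h⁻¹,
      ‖p‖ₑ⁻¹ * ‖y + f • ι ((‖p‖ ^ 2)⁻¹ • p)‖ₑ⁻¹ ≤ ENNReal.ofReal 4 := fun p hp => by
    have hlow := quarter_le_norm_mul_norm_add ι (one_pos.trans hp.1) hp.2.le hf hy
    rw [enorm_inv_mul_enorm_inv, ← ENNReal.ofReal_inv_of_pos (by linarith)]
    exact ENNReal.ofReal_le_ofReal (inv_le_of_inv_le₀ (by norm_num) (by linarith))
  have hvol : volume ((‖·‖) ⁻¹' Ioo 1 h⁻¹ : Set ℂ) ≤ ENNReal.ofReal (π * h⁻¹ ^ 2) := by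
    calc _ ≤ volume (Metric.ball (0 : ℂ) h⁻¹) :=
          measure_mono fun p hp => mem_ball_zero_iff.2 hp.2
      _ = _ := by
          rw [Complex.volume_ball, mul_comm, ENNReal.ofReal_mul pi_nonneg,
            ENNReal.ofReal_pow (by positivity), ← NNReal.coe_real_pi, ENNReal.ofReal_coe_nnreal]
  have hint : ∫⁻ ξ, ‖y + f • ξ‖ₑ⁻¹ ∂inversionMeasure ι h ≤ ENNReal.ofReal (2 / h) := by
    rw [lintegral_inversionMeasure ι (F := fun ξ => ‖y + f • ξ‖ₑ⁻¹) (by fun_prop)]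
    calc _ ≤ ENNReal.ofReal (h / (2 * π)) *
          (ENNReal.ofReal 4 * ENNReal.ofReal (π * h⁻¹ ^ 2)) := by
          gcongr
          refine (setLIntegral_mono' (measurable_norm measurableSet_Ioo) hpoint).trans ?_
          rw [lintegral_const, Measure.restrict_apply_univ]
          gcongr
      _ = ENNReal.ofReal (2 / h) := by
          rw [← ENNReal.ofReal_mul (by norm_num), ← ENNReal.ofReal_mul (by positivity)]
          congr 1
          field_simp
          norm_num
  calc _ ≤ ENNReal.ofReal (2 / h) + ENNReal.ofReal (2 / h) := by gcongr
    _ = (ENNReal.ofReal (h / 4))⁻¹ := by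
        rw [← ENNReal.ofReal_add (by positivity) (by positivity),
          ← ENNReal.ofReal_inv_of_pos (by positivity)]
        congr 1
        field_simp
        norm_num
    _ ≤ ‖y‖ₑ⁻¹ := by rw [← ofReal_norm]; gcongr

end InversionMeasure

lemma exists_pos_forall_le {ι : Type*} [Finite ι] {f : ι → ℝ} (hf : ∀ i, 0 < f i) :
    ∃ c > 0, ∀ i, c ≤ f i := by
  rcases isEmpty_or_nonempty ι with _ | _
  · exact ⟨1, one_pos, isEmptyElim⟩
  · obtain ⟨i, hi⟩ := Finite.exists_min f
    exact ⟨f i, hf i, hi⟩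

lemma sq_norm_setIntegral_le {α V : Type*} [MeasurableSpace α] {μ : Measure α}
    [NormedAddCommGroup V] [NormedSpace ℝ V] {s : Set α} (hs : μ s ≠ ∞) {v : α → V} {e : α → ℝ}
    (hv : IntegrableOn v s μ) (he : IntegrableOn e s μ) (hve : ∀ x, ‖v x‖ ^ 2 ≤ e x) :
    ‖∫ x in s, v x ∂μ‖ ^ 2 ≤ μ.real s * ∫ x in s, e x ∂μ := by
  rcases eq_or_ne (μ s) 0 with h0 | h0
  · simp [Measure.restrict_eq_zero.2 h0, measureReal_def, h0]
  have hvsq : IntegrableOn (fun x => ‖v x‖ ^ 2) s μ :=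
    he.mono' (hv.aestronglyMeasurable.norm.pow 2) (ae_of_all _ fun x => by
      rw [norm_of_nonneg (sq_nonneg _)]; exact hve x)
  have hpos : 0 < μ.real s := ENNReal.toReal_pos h0 hs
  have hjensen := (even_two.convexOn_pow (𝕜 := ℝ)).map_set_average_le (by fun_prop) isClosed_univ
    h0 hs (by simp) hv.norm hvsq
  simp only [setAverage_eq, smul_eq_mul] at hjensen
  calc ‖∫ x in s, v x ∂μ‖ ^ 2 ≤ (∫ x in s, ‖v x‖ ∂μ) ^ 2 := by
        gcongr
        exact norm_integral_le_integral_norm _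
    _ = μ.real s ^ 2 * ((μ.real s)⁻¹ * ∫ x in s, ‖v x‖ ∂μ) ^ 2 := by
        rw [mul_pow, ← mul_assoc, ← mul_pow, mul_inv_cancel₀ hpos.ne', one_pow, one_mul]
    _ ≤ μ.real s ^ 2 * ((μ.real s)⁻¹ * ∫ x in s, ‖v x‖ ^ 2 ∂μ) := by gcongr
    _ = μ.real s * ∫ x in s, ‖v x‖ ^ 2 ∂μ := by field_simp
    _ ≤ μ.real s * ∫ x in s, e x ∂μ :=
        mul_le_mul_of_nonneg_left (integral_mono hvsq he hve) hpos.le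

section Pigeonhole

variable {V : Type*} [SeminormedAddCommGroup V] {η K : ℝ} {r : ℝ → V} {G : ℝ → ℝ}

lemma norm_le_mul_sqrt_of_sub_le (hη : 0 ≤ η) {t₀ s s' : ℝ} (hs' : 0 ≤ s')
    (hss' : s' ≤ s) (hG : MonotoneOn G (Icc t₀ (t₀ + s)))
    (hr : ∀ u t, t₀ ≤ u → u ≤ t → t ≤ t₀ + s → ‖r t - r u‖ ^ 2 ≤ (t - u) * (G t - G u))
    (hGK : G (t₀ + s) - G t₀ ≤ K) (hs'K : s' * K ≤ (η / 4) ^ 2 * s)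
    (hGs : G (t₀ + s) - G (t₀ + s') ≤ η ^ 2 / 4) (hr₀ : ‖r t₀‖ ≤ η / 4 * √s)
    {t : ℝ} (ht : t ∈ Icc t₀ (t₀ + s)) : ‖r t‖ ≤ η * √s := by
  have hs : 0 ≤ s := hs'.trans hss'
  have hsqrt : 0 ≤ η * √s := by positivity
  have hend : t₀ + s ∈ Icc t₀ (t₀ + s) := ⟨by linarith, le_rfl⟩
  have hearly : ∀ u ∈ Icc t₀ (t₀ + s'), ‖r u‖ ≤ η / 2 * √s := fun u hu => by
    have hus : u ≤ t₀ + s := by linarith [hu.2]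
    have hinc : ‖r u - r t₀‖ ≤ η / 4 * √s := by
      refine abs_le_of_sq_le_sq' ?_ (by positivity) |>.2
      calc ‖r u - r t₀‖ ^ 2 ≤ (u - t₀) * (G u - G t₀) := hr _ _ le_rfl hu.1 hus
        _ ≤ s' * K := by
            gcongr
            · linarith [hG ⟨le_rfl, by linarith⟩ ⟨hu.1, hus⟩ hu.1]
            · linarith [hu.2]
            · linarith [hG ⟨hu.1, hus⟩ hend hus]
        _ ≤ (η / 4 * √s) ^ 2 := by rwa [mul_pow, Real.sq_sqrt hs]
    linarith [norm_le_norm_add_norm_sub' (r u) (r t₀)]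
  rcases le_total t (t₀ + s') with hts | hts
  · linarith [hearly t ⟨ht.1, hts⟩]
  have hlate : ‖r t - r (t₀ + s')‖ ≤ η / 2 * √s := by
    refine abs_le_of_sq_le_sq' ?_ (by positivity) |>.2
    calc ‖r t - r (t₀ + s')‖ ^ 2 ≤ (t - (t₀ + s')) * (G t - G (t₀ + s')) :=
          hr _ _ (by linarith) hts ht.2
      _ ≤ s * (η ^ 2 / 4) := by
          gcongr
          · linarith [hG ⟨by linarith, hts.trans ht.2⟩ ht hts]
          · linarith [ht.2]
          · linarith [hG ht hend ht.2]
      _ = (η / 2 * √s) ^ 2 := by rw [mul_pow, Real.sq_sqrt hs]; ring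
  linarith [norm_le_norm_add_norm_sub' (r t) (r (t₀ + s')),
    hearly (t₀ + s') ⟨by linarith, le_rfl⟩]

/-- Pigeonhole over the scales `τ / A ^ k`: the increments of `G` between consecutive ones add up to
at most `K`, so one of them is small. -/
lemma exists_scale_norm_le {τ : ℝ} (hη : 0 < η) (hK : 0 ≤ K) (hτ : 0 < τ) :
    ∃ ε > 0, ∀ (r : ℝ → V) (G : ℝ → ℝ) (t₀ : ℝ), MonotoneOn G (Icc t₀ (t₀ + τ)) →
      (∀ u t, t₀ ≤ u → u ≤ t → t ≤ t₀ + τ → ‖r t - r u‖ ^ 2 ≤ (t - u) * (G t - G u)) →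
      G (t₀ + τ) - G t₀ ≤ K → ‖r t₀‖ ≤ ε →
      ∃ s, 0 < s ∧ s ≤ τ ∧ ∀ t ∈ Icc t₀ (t₀ + s), ‖r t‖ ≤ η * √s := by
  obtain ⟨n, hn⟩ := exists_nat_gt (K / (η ^ 2 / 4))
  have hn0 : 0 < n := Nat.cast_pos.1 ((by positivity : 0 ≤ K / (η ^ 2 / 4)).trans_lt hn)
  set A : ℝ := 16 * K / η ^ 2 + 1 with hA
  have hA1 : 1 ≤ A := le_add_of_nonneg_left (by positivity)
  let scale : ℕ → ℝ := fun k => τ / A ^ k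
  have hscale : ∀ k, 0 < scale k := fun k => by positivity
  have hanti : Antitone scale := fun k l hkl =>
    div_le_div_of_nonneg_left hτ.le (by positivity) (pow_le_pow_right₀ hA1 hkl)
  have hscale0 : scale 0 = τ := by simp [scale]
  have hsucc : ∀ k, scale (k + 1) * K ≤ (η / 4) ^ 2 * scale k := fun k => by
    have hAK : K ≤ (η / 4) ^ 2 * A := by
      rw [hA, mul_add, mul_one, show (η / 4) ^ 2 * (16 * K / η ^ 2) = K by field_simp; norm_num]
      exact le_add_of_nonneg_right (by positivity)
    calc scale (k + 1) * K ≤ scale (k + 1) * ((η / 4) ^ 2 * A) := by gcongr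
      _ = (η / 4) ^ 2 * scale k := by simp only [scale, pow_succ]; field_simp
  refine ⟨η / 4 * √(scale n), by have := hscale n; positivity, fun r G t₀ hG hr hGK hr₀ => ?_⟩
  have hmem : ∀ k, t₀ + scale k ∈ Icc t₀ (t₀ + τ) := fun k =>
    ⟨by linarith [hscale k], by linarith [hanti k.zero_le]⟩
  obtain ⟨k, hk, hGs⟩ : ∃ k ∈ Finset.range n,
      G (t₀ + scale k) - G (t₀ + scale (k + 1)) ≤ η ^ 2 / 4 := by
    refine Finset.exists_le_of_sum_le (Finset.nonempty_range_iff.2 hn0.ne') ?_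
    rw [Finset.sum_range_sub' fun k => G (t₀ + scale k), Finset.sum_const, Finset.card_range,
      nsmul_eq_mul, hscale0]
    have hGn := hG ⟨le_rfl, by linarith⟩ (hmem n) (hmem n).1
    linarith [(div_lt_iff₀ (by positivity)).1 hn]
  have hkτ := (hmem k).2
  have hGk := hG (hmem k) ⟨by linarith, le_rfl⟩ hkτ
  refine ⟨scale k, hscale k, by linarith, fun t ht => norm_le_mul_sqrt_of_sub_le hη.le
    (hscale (k + 1)).le (hanti k.le_succ) (hG.mono (Icc_subset_Icc_right hkτ))
    (fun u t h₁ h₂ h₃ => hr u t h₁ h₂ (h₃.trans hkτ)) (by linarith) (hsucc k) hGs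
    (hr₀.trans ?_) ht⟩
  gcongr
  exact hanti (Finset.mem_range.1 hk).le

end Pigeonhole

section MassNorm

variable {m : Fin N → ℝ} {μ : ℝ}

lemma mnorm_sq (hm : ∀ i, 0 < m i) (x : Conf d N) : mnorm m x ^ 2 = ∑ i, m i * ‖x i‖ ^ 2 := by
  simp only [mnorm, minner, real_inner_self_eq_norm_sq]
  exact Real.sq_sqrt (Finset.sum_nonneg fun i _ => mul_nonneg (hm i).le (sq_nonneg _))

lemma mnorm_neg (x : Conf d N) : mnorm m (-x) = mnorm m x := by simp [mnorm, minner]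

lemma continuous_mnorm (m : Fin N → ℝ) : Continuous (mnorm m : Conf d N → ℝ) := by
  unfold mnorm minner
  fun_prop

lemma mnorm_add_sq_add_mnorm_sub_sq (hm : ∀ i, 0 < m i) (x y : Conf d N) :
    mnorm m (x + y) ^ 2 + mnorm m (x - y) ^ 2 = 2 * mnorm m x ^ 2 + 2 * mnorm m y ^ 2 := by
  simp only [mnorm_sq hm, Finset.mul_sum, ← Finset.sum_add_distrib, Pi.add_apply, Pi.sub_apply]
  refine Finset.sum_congr rfl fun i _ => ?_
  linear_combination m i * parallelogram_law_with_norm ℝ (x i) (y i)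

lemma mul_sq_norm_sub_le_mnorm_sq (hμ : 0 < μ) (hμm : ∀ i, μ ≤ m i) (x : Conf d N) (i j : Fin N) :
    μ * ‖x i - x j‖ ^ 2 ≤ 2 * mnorm m x ^ 2 := by
  have hm : ∀ i, 0 < m i := fun i => hμ.trans_le (hμm i)
  rcases eq_or_ne i j with rfl | hij
  · simpa using sq_nonneg (mnorm m x)
  calc μ * ‖x i - x j‖ ^ 2 ≤ μ * (2 * (‖x i‖ ^ 2 + ‖x j‖ ^ 2)) := by
        gcongr
        linarith [parallelogram_law_with_norm ℝ (x i) (x j), sq_nonneg ‖x i + x j‖]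
    _ = 2 * (μ * ‖x i‖ ^ 2 + μ * ‖x j‖ ^ 2) := by ring
    _ ≤ 2 * (m i * ‖x i‖ ^ 2 + m j * ‖x j‖ ^ 2) := by gcongr <;> apply hμm
    _ ≤ 2 * mnorm m x ^ 2 := by
        rw [mnorm_sq hm]
        gcongr
        exact Finset.add_le_sum (f := fun k => m k * ‖x k‖ ^ 2)
          (fun k _ => mul_nonneg (hm k).le (sq_nonneg _))
          (Finset.mem_univ i) (Finset.mem_univ j) hij

lemma le_mnorm_sub_of_collision (hμ : 0 < μ) (hμm : ∀ i, μ ≤ m i) {ε : ℝ} (hε : 0 ≤ ε)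
    {x y : Conf d N} (hx : ∀ i j, i ≠ j → ε ≤ ‖x i - x j‖) (hy : collision y) :
    √(μ / 2) * ε ≤ mnorm m (x - y) := by
  obtain ⟨i, j, hij, hyij⟩ := hy
  have hdiff : (x - y) i - (x - y) j = x i - x j := by simp [hyij]
  have hsq := mul_sq_norm_sub_le_mnorm_sq hμ hμm (x - y) i j
  rw [hdiff] at hsq
  refine le_of_sq_le_sq ?_ (Real.sqrt_nonneg _)
  rw [mul_pow, Real.sq_sqrt (by positivity)]
  have : ε ^ 2 ≤ ‖x i - x j‖ ^ 2 := by gcongr; exact hx i j hij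
  nlinarith

end MassNorm

section Curves

lemma timeSet_top (t₀ : ℝ) : timeSet t₀ ⊤ = Ioi t₀ := by ext t; simp [timeSet]

lemma Ioc_subset_Ioi_of_le {b s : ℝ} (hs : b ≤ s) (t : ℝ) : Ioc s t ⊆ Ioi b :=
  Ioc_subset_Ioi_self.trans (Ioi_subset_Ioi hs)

variable {m : Fin N → ℝ} {b s t μ : ℝ} {φ φ' ψ ψ' : ℝ → Conf d N}

lemma InD.inX (h : InD m b ⊤ φ φ') (ht : b ≤ t) : inX m (φ t) := h.2.1 t ht (EReal.coe_lt_top t)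

lemma InD.eq_integral (h : InD m b ⊤ φ φ') (ht : b ≤ t) : φ t = ∫ x in Ioc b t, φ' x :=
  h.2.2.1 t ht (EReal.coe_lt_top t)

lemma InD.integrableOn_Ioc (h : InD m b ⊤ φ φ') (hs : b ≤ s) : IntegrableOn φ' (Ioc s t) := by
  rcases le_or_gt b t with ht | ht
  · exact (h.2.2.2.1 t ht (EReal.coe_lt_top t)).mono_set (Ioc_subset_Ioc_left hs)
  · rw [Ioc_eq_empty (by linarith)]
    exact integrableOn_empty

lemma InD.integrableOn_sq (h : InD m b ⊤ φ φ') :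
    IntegrableOn (fun t => mnorm m (φ' t) ^ 2) (Ioi b) :=
  timeSet_top b ▸ h.2.2.2.2

lemma InD.aestronglyMeasurable (h : InD m b ⊤ φ φ') :
    AEStronglyMeasurable φ' (volume.restrict (Ioi b)) := by
  rw [← iUnion_Ioc_eq_Ioi_self_iff.2 fun x _ => exists_nat_ge x]
  exact AEStronglyMeasurable.iUnion fun n => (h.integrableOn_Ioc le_rfl).aestronglyMeasurable

lemma InD.sub_eq_integral (h : InD m b ⊤ φ φ') (hs : b ≤ s) (hst : s ≤ t) :
    φ t - φ s = ∫ x in Ioc s t, φ' x := by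
  rw [h.eq_integral (hs.trans hst), h.eq_integral hs, ← Ioc_union_Ioc_eq_Ioc hs hst,
    setIntegral_union (Ioc_disjoint_Ioc_of_le le_rfl) measurableSet_Ioc
      (h.integrableOn_Ioc le_rfl) (h.integrableOn_Ioc hs), add_sub_cancel_left]

lemma InD.continuousOn (h : InD m b ⊤ φ φ') : ContinuousOn φ (Ici b) := by
  intro t ht
  have hprim : ContinuousOn (fun t => ∫ x in Ioc b t, φ' x) (Icc b (t + 1)) :=
    intervalIntegral.continuousOn_primitive
      ((integrableOn_Icc_iff_integrableOn_Ioc).2 (h.integrableOn_Ioc le_rfl))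
  have hIcc : ContinuousOn φ (Icc b (t + 1)) := hprim.congr fun x hx => h.eq_integral hx.1
  refine (hIcc t ⟨ht, by linarith⟩).mono_of_mem_nhdsWithin ?_
  rw [← Ici_inter_Iic]
  exact inter_mem self_mem_nhdsWithin (mem_nhdsWithin_of_mem_nhds (Iic_mem_nhds (by linarith)))

lemma InD.neg (h : InD m b ⊤ φ φ') : InD m b ⊤ (-φ) (-φ') := by
  refine ⟨?_, fun t ht _ => ?_, fun t ht _ => ?_, fun t _ _ => (h.integrableOn_Ioc le_rfl).neg, ?_⟩
  · rw [Pi.neg_apply, h.1, neg_zero]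
  · have := h.inX ht
    simp only [NBodyHJ.inX, Pi.neg_apply, smul_neg, Finset.sum_neg_distrib, neg_eq_zero] at this ⊢
    exact this
  · simp only [Pi.neg_apply]
    rw [integral_neg, h.eq_integral ht]
  · simpa only [Pi.neg_apply, mnorm_neg] using h.2.2.2.2

lemma InD.add (hm : ∀ i, 0 < m i) (h : InD m b ⊤ φ φ') (k : InD m b ⊤ ψ ψ') :
    InD m b ⊤ (φ + ψ) (φ' + ψ') := by
  refine ⟨?_, fun t ht _ => ?_, fun t ht _ => ?_,
    fun t _ _ => (h.integrableOn_Ioc le_rfl).add (k.integrableOn_Ioc le_rfl), ?_⟩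
  · rw [Pi.add_apply, h.1, k.1, add_zero]
  · have h₁ := h.inX ht
    have k₁ := k.inX ht
    simp only [NBodyHJ.inX, Pi.add_apply, smul_add, Finset.sum_add_distrib] at h₁ k₁ ⊢
    rw [h₁, k₁, add_zero]
  · simp only [Pi.add_apply]
    rw [integral_add (h.integrableOn_Ioc le_rfl) (k.integrableOn_Ioc le_rfl), h.eq_integral ht,
      k.eq_integral ht]
  · rw [timeSet_top]
    refine ((h.integrableOn_sq.const_mul 2).add (k.integrableOn_sq.const_mul 2)).mono'
      (((continuous_mnorm m).comp_aestronglyMeasurable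
        (h.aestronglyMeasurable.add k.aestronglyMeasurable)).pow 2) (ae_of_all _ fun t => ?_)
    rw [norm_of_nonneg (sq_nonneg _)]
    exact (le_add_of_nonneg_right (sq_nonneg _)).trans_eq
      (mnorm_add_sq_add_mnorm_sub_sq hm (φ' t) (ψ' t))

lemma InD.sq_norm_relative_displacement_le (hμ : 0 < μ) (hμm : ∀ i, μ ≤ m i)
    (h : InD m b ⊤ φ φ') (hs : b ≤ s) (hst : s ≤ t) (i j : Fin N) :
    ‖φ t i - φ t j - (φ s i - φ s j)‖ ^ 2 ≤
      (t - s) * (2 / μ * ∫ x in Ioc s t, mnorm m (φ' x) ^ 2) := by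
  have happly : ∀ k, IntegrableOn (fun x => φ' x k) (Ioc s t) := fun k =>
    (h.integrableOn_Ioc hs).eval k
  have hdisp : ∀ k, φ t k - φ s k = ∫ x in Ioc s t, φ' x k := fun k => by
    rw [← eval_integral happly, ← h.sub_eq_integral hs hst, Pi.sub_apply]
  have hrel : φ t i - φ t j - (φ s i - φ s j) = ∫ x in Ioc s t, (φ' x i - φ' x j) := by
    rw [integral_sub (happly i) (happly j), ← hdisp, ← hdisp]
    abel
  have hsq : IntegrableOn (fun x => mnorm m (φ' x) ^ 2) (Ioc s t) :=
    h.integrableOn_sq.mono_set (Ioc_subset_Ioi_of_le hs t)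
  rw [hrel, ← integral_const_mul]
  refine (sq_norm_setIntegral_le (by simp) ((happly i).sub (happly j)) (hsq.const_mul (2 / μ))
    fun x => ?_).trans_eq ?_
  · rw [div_mul_eq_mul_div, le_div_iff₀ hμ, mul_comm]
    exact mul_sq_norm_sub_le_mnorm_sq hμ hμm _ _ _
  · rw [Real.volume_real_Ioc_of_le hst]

lemma InD.sq_norm_relative_position_le (hμ : 0 < μ) (hμm : ∀ i, μ ≤ m i) (h : InD m b ⊤ φ φ')
    (ht : b ≤ t) (i j : Fin N) :
    ‖φ t i - φ t j‖ ^ 2 ≤ (t - b) * (2 / μ * ∫ x in Ioi b, mnorm m (φ' x) ^ 2) := by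
  have hdisp := h.sq_norm_relative_displacement_le hμ hμm le_rfl ht i j
  simp only [h.1, Pi.zero_apply, sub_zero] at hdisp
  refine hdisp.trans ?_
  gcongr
  · exact ae_of_all _ fun x => sq_nonneg _
  · exact h.integrableOn_sq
  · exact Ioc_subset_Ioi_self

end Curves

section HypCurve

variable {m : Fin N → ℝ} {a x : Conf d N} {s t μ : ℝ} {φ φ' : ℝ → Conf d N}

lemma hypCurve_add (a x : Conf d N) (φ ψ : ℝ → Conf d N) (t : ℝ) :
    hypCurve a x (φ + ψ) t = hypCurve a x φ t + ψ t := by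
  simp only [hypCurve, Pi.add_apply]
  abel

lemma InD.continuousOn_hypCurve (h : InD m 1 ⊤ φ φ') (a x : Conf d N) :
    ContinuousOn (hypCurve a x φ) (Ici 1) := by
  unfold hypCurve
  exact ((h.continuousOn.add (by fun_prop)).add continuousOn_const).sub continuousOn_const

/-- A function of time whose increments control the squared displacement of the particles `i` and
`j` relative to each other along `hypCurve a x φ`. -/
def relEnergy (m : Fin N → ℝ) (μ : ℝ) (a : Conf d N) (φ' : ℝ → Conf d N) (i j : Fin N) (t : ℝ) :
    ℝ :=
  4 / μ * (∫ x in Ioc 1 t, mnorm m (φ' x) ^ 2) + 2 * ‖a i - a j‖ ^ 2 * t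

lemma InD.relEnergy_sub (h : InD m 1 ⊤ φ φ') (hs : 1 ≤ s) (hst : s ≤ t) (i j : Fin N) :
    relEnergy m μ a φ' i j t - relEnergy m μ a φ' i j s =
      4 / μ * (∫ x in Ioc s t, mnorm m (φ' x) ^ 2) + 2 * ‖a i - a j‖ ^ 2 * (t - s) := by
  have hsq : ∀ {u v : ℝ}, 1 ≤ u → IntegrableOn (fun x => mnorm m (φ' x) ^ 2) (Ioc u v) :=
    fun hu => h.integrableOn_sq.mono_set (Ioc_subset_Ioi_of_le hu _)
  unfold relEnergy
  rw [← Ioc_union_Ioc_eq_Ioc hs hst, setIntegral_union (Ioc_disjoint_Ioc_of_le le_rfl)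
    measurableSet_Ioc (hsq le_rfl) (hsq hs)]
  ring

lemma InD.relEnergy_monotoneOn (hμ : 0 < μ) (h : InD m 1 ⊤ φ φ') (a : Conf d N) (i j : Fin N) :
    MonotoneOn (relEnergy m μ a φ' i j) (Ici 1) := fun s hs t _ hst => by
  have : 0 ≤ ∫ x in Ioc s t, mnorm m (φ' x) ^ 2 := integral_nonneg fun _ => sq_nonneg _
  have := sub_nonneg.2 hst
  rw [← sub_nonneg, h.relEnergy_sub hs hst]
  positivity

lemma InD.relEnergy_sub_le (hμ : 0 < μ) (h : InD m 1 ⊤ φ φ') {E : ℝ}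
    (hE : ∫ t in Ioi 1, mnorm m (φ' t) ^ 2 ≤ E) (hs : 1 ≤ s) (hst : s ≤ t) (i j : Fin N) :
    relEnergy m μ a φ' i j t - relEnergy m μ a φ' i j s ≤
      4 / μ * E + 2 * ‖a i - a j‖ ^ 2 * (t - s) := by
  rw [h.relEnergy_sub hs hst]
  gcongr
  exact (setIntegral_mono_set h.integrableOn_sq (ae_of_all _ fun _ => sq_nonneg _)
    (Ioc_subset_Ioi_of_le hs t).eventuallyLE).trans hE

lemma InD.sq_norm_hypCurve_displacement_le (hμ : 0 < μ) (hμm : ∀ i, μ ≤ m i)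
    (h : InD m 1 ⊤ φ φ') (a x : Conf d N) (hs : 1 ≤ s) (hst : s ≤ t) (i j : Fin N) :
    ‖hypCurve a x φ t i - hypCurve a x φ t j - (hypCurve a x φ s i - hypCurve a x φ s j)‖ ^ 2 ≤
      (t - s) * (relEnergy m μ a φ' i j t - relEnergy m μ a φ' i j s) := by
  have hφ := h.sq_norm_relative_displacement_le hμ hμm hs hst i j
  set v := φ t i - φ t j - (φ s i - φ s j)
  set w := (t - s) • (a i - a j) with hw
  have hsplit : hypCurve a x φ t i - hypCurve a x φ t j -
      (hypCurve a x φ s i - hypCurve a x φ s j) = v + w := by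
    simp only [hypCurve, Pi.add_apply, Pi.sub_apply, Pi.smul_apply, v, w]
    module
  have hwsq : ‖w‖ ^ 2 = (t - s) ^ 2 * ‖a i - a j‖ ^ 2 := by
    rw [hw, norm_smul, mul_pow, Real.norm_eq_abs, sq_abs]
  calc _ ≤ 2 * ‖v‖ ^ 2 + 2 * ‖w‖ ^ 2 := by
        rw [hsplit]
        linarith [parallelogram_law_with_norm ℝ v w, sq_nonneg ‖v - w‖]
    _ ≤ 2 * ((t - s) * (2 / μ * ∫ x in Ioc s t, mnorm m (φ' x) ^ 2)) +
        2 * ((t - s) ^ 2 * ‖a i - a j‖ ^ 2) := by rw [hwsq]; gcongr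
    _ = _ := by rw [h.relEnergy_sub hs hst]; ring

lemma InD.half_le_norm_hypCurve_sub (hμ : 0 < μ) (hμm : ∀ i, μ ≤ m i) (h : InD m 1 ⊤ φ φ')
    {E : ℝ} (hE : ∫ t in Ioi 1, mnorm m (φ' t) ^ 2 ≤ E) {c τ : ℝ} {i j : Fin N}
    (hc : 0 ≤ c) (hx : c ≤ ‖x i - x j‖)
    (hτc : τ * (4 / μ * E + 2 * ‖a i - a j‖ ^ 2 * τ) ≤ (c / 2) ^ 2) (ht : 1 ≤ t)
    (htτ : t ≤ 1 + τ) : c / 2 ≤ ‖hypCurve a x φ t i - hypCurve a x φ t j‖ := by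
  have hstart : hypCurve a x φ 1 = x := by simp [hypCurve, h.1]
  have hdisp := h.sq_norm_hypCurve_displacement_le hμ hμm a x le_rfl ht i j
  rw [hstart] at hdisp
  have hG := h.relEnergy_sub_le (a := a) hμ hE le_rfl ht i j
  have : 0 ≤ E := (integral_nonneg fun _ => sq_nonneg _).trans hE
  have hsmall : ‖hypCurve a x φ t i - hypCurve a x φ t j - (x i - x j)‖ ≤ c / 2 := by
    refine abs_le_of_sq_le_sq' (hdisp.trans ?_) (by positivity) |>.2
    refine le_trans ?_ hτc
    have hmono := h.relEnergy_monotoneOn hμ a i j self_mem_Ici ht ht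
    have ht' : t - 1 ≤ τ := by linarith
    have hτ : 0 ≤ τ := by linarith
    calc _ ≤ τ * (4 / μ * E + 2 * ‖a i - a j‖ ^ 2 * (t - 1)) := by gcongr
      _ ≤ _ := by gcongr
  linarith [norm_le_norm_add_norm_sub' (x i - x j) (hypCurve a x φ t i - hypCurve a x φ t j),
    norm_sub_rev (x i - x j) (hypCurve a x φ t i - hypCurve a x φ t j)]

lemma exists_hypCurve_scale_norm_le (hμ : 0 < μ) (hμm : ∀ i, μ ≤ m i) (a : Conf d N)
    {η τ E : ℝ} (hη : 0 < η) (hτ : 0 < τ) (hE : 0 ≤ E) (i j : Fin N) :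
    ∃ ε > 0, ∀ (x : Conf d N) (φ φ' : ℝ → Conf d N), InD m 1 ⊤ φ φ' →
      ∫ t in Ioi 1, mnorm m (φ' t) ^ 2 ≤ E → ∀ t₀, 1 ≤ t₀ →
      ‖hypCurve a x φ t₀ i - hypCurve a x φ t₀ j‖ ≤ ε →
      ∃ s, 0 < s ∧ s ≤ τ ∧ ∀ t ∈ Icc t₀ (t₀ + s),
        ‖hypCurve a x φ t i - hypCurve a x φ t j‖ ≤ η * √s := by
  obtain ⟨ε, hε, hscale⟩ := exists_scale_norm_le (V := EuclideanSpace ℝ (Fin d)) hη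
    (K := 4 / μ * E + 2 * ‖a i - a j‖ ^ 2 * τ) (by positivity) hτ
  refine ⟨ε, hε, fun x φ φ' h hφE t₀ ht₀ => ?_⟩
  have hG := (h.relEnergy_monotoneOn hμ a i j).mono fun t (ht : t ∈ Icc t₀ (t₀ + τ)) =>
    ht₀.trans ht.1
  have hGK := h.relEnergy_sub_le (a := a) hμ hφE ht₀ (le_add_of_nonneg_right hτ.le) i j
  rw [add_sub_cancel_left] at hGK
  exact hscale (fun t => hypCurve a x φ t i - hypCurve a x φ t j) (relEnergy m μ a φ' i j) t₀ hG
    (fun u t hu hut _ => h.sq_norm_hypCurve_displacement_le hμ hμm a x (ht₀.trans hu) hut i j) hGK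

end HypCurve

section Potential

variable {m : Fin N → ℝ} {x : Conf d N} {γ : ℝ → Conf d N} {I : Set ℝ}

/-- The Newtonian potential with values in `[0, ∞]`, infinite exactly at collisions. Unlike `U`,
which has a junk value there, it can be integrated without discussing collisions first. -/
def potE (m : Fin N → ℝ) (x : Conf d N) : ℝ≥0∞ :=
  ∑ i : Fin N, ∑ j : Fin N, if i < j then ENNReal.ofReal (m i * m j) * ‖x i - x j‖ₑ⁻¹ else 0

lemma measurable_potE (m : Fin N → ℝ) : Measurable (potE m : Conf d N → ℝ≥0∞) := by
  refine Finset.measurable_sum _ fun i _ => Finset.measurable_sum _ fun j _ => ?_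
  split_ifs
  · exact Measurable.const_mul (by fun_prop) _
  · exact measurable_const

lemma U_nonneg (hm : ∀ i, 0 < m i) (x : Conf d N) : 0 ≤ U m x := by
  refine Finset.sum_nonneg fun i _ => Finset.sum_nonneg fun j _ => ?_
  have := hm i
  have := hm j
  split_ifs <;> positivity

lemma U_smul (m : Fin N → ℝ) (a : Conf d N) {t : ℝ} (ht : 0 < t) : U m (t • a) = t⁻¹ * U m a := by
  simp only [U, Finset.mul_sum, mul_ite, mul_zero]
  refine Finset.sum_congr rfl fun i _ => Finset.sum_congr rfl fun j _ => if_congr Iff.rfl ?_ rfl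
  rw [Pi.smul_apply, Pi.smul_apply, ← smul_sub, norm_smul, norm_of_nonneg ht.le, mul_comm t,
    div_mul_eq_div_div, div_eq_inv_mul]

lemma potE_eq_ofReal (hm : ∀ i, 0 < m i) (hx : ¬ collision x) :
    potE m x = ENNReal.ofReal (U m x) := by
  have hterm : ∀ i j : Fin N, 0 ≤ if i < j then m i * m j / ‖x i - x j‖ else 0 := fun i j => by
    have := hm i
    have := hm j
    split_ifs <;> positivity
  rw [U, ENNReal.ofReal_sum_of_nonneg fun i _ => Finset.sum_nonneg fun j _ => hterm i j]
  refine Finset.sum_congr rfl fun i _ => ?_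
  rw [ENNReal.ofReal_sum_of_nonneg fun j _ => hterm i j]
  refine Finset.sum_congr rfl fun j _ => ?_
  split_ifs with hij
  · have hpos : 0 < ‖x i - x j‖ :=
      norm_pos_iff.2 (sub_ne_zero.2 fun h => hx ⟨i, j, hij.ne, h⟩)
    rw [div_eq_mul_inv, ENNReal.ofReal_mul (mul_pos (hm i) (hm j)).le,
      ENNReal.ofReal_inv_of_pos hpos, ofReal_norm]
  · rw [ENNReal.ofReal_zero]

lemma not_collision_of_potE_ne_top (hm : ∀ i, 0 < m i) (hx : potE m x ≠ ⊤) : ¬ collision x := by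
  have hne : ∀ i j : Fin N, i < j → x i ≠ x j := fun i j hij h => hx <| by
    refine ENNReal.sum_eq_top.2 ⟨i, Finset.mem_univ _, ENNReal.sum_eq_top.2
      ⟨j, Finset.mem_univ _, ?_⟩⟩
    rw [if_pos hij, h]
    simp [ENNReal.mul_top, mul_pos (hm i) (hm j)]
  rintro ⟨i, j, hij, h⟩
  rcases lt_or_gt_of_ne hij with hlt | hlt
  · exact hne i j hlt h
  · exact hne j i hlt h.symm

lemma ae_not_collision_of_lintegral_potE_ne_top (hm : ∀ i, 0 < m i)
    (hγ : AEMeasurable γ (volume.restrict I)) (h : ∫⁻ t in I, potE m (γ t) ≠ ⊤) :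
    ∀ᵐ t ∂volume.restrict I, ¬ collision (γ t) := by
  filter_upwards [ae_lt_top' ((measurable_potE m).comp_aemeasurable hγ) h] with t ht
  exact not_collision_of_potE_ne_top hm ht.ne

lemma integrableOn_U_of_lintegral_potE_ne_top (hm : ∀ i, 0 < m i)
    (hγ : AEMeasurable γ (volume.restrict I)) (h : ∫⁻ t in I, potE m (γ t) ≠ ⊤) :
    IntegrableOn (fun t => U m (γ t)) I := by
  refine (integrable_toReal_of_lintegral_ne_top
    ((measurable_potE m).comp_aemeasurable hγ) h).congr ?_
  filter_upwards [ae_not_collision_of_lintegral_potE_ne_top hm hγ h] with t ht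
  rw [Function.comp_apply, potE_eq_ofReal hm ht, ENNReal.toReal_ofReal (U_nonneg hm _)]

lemma lintegral_potE_eq (hm : ∀ i, 0 < m i)
    (hcol : ∀ᵐ t ∂volume.restrict I, ¬ collision (γ t))
    (hU : IntegrableOn (fun t => U m (γ t)) I) :
    ∫⁻ t in I, potE m (γ t) = ENNReal.ofReal (∫ t in I, U m (γ t)) := by
  rw [ofReal_integral_eq_lintegral_ofReal hU (ae_of_all _ fun t => U_nonneg hm _)]
  refine lintegral_congr_ae ?_
  filter_upwards [hcol] with t ht
  exact potE_eq_ofReal hm ht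

end Potential

section FiniteAction

/-- The curve `φ` with derivative `φ'` is an admissible variation of finite action. -/
structure HasFiniteAction (m : Fin N → ℝ) (a x : Conf d N) (φ φ' : ℝ → Conf d N) : Prop where
  inD : InD m 1 ⊤ φ φ'
  integrableOn_hypIntegrand : IntegrableOn (hypIntegrand m a x φ φ') (Ioi 1)
  ae_not_collision : ∀ᵐ t ∂volume.restrict (Ioi 1), ¬ collision (hypCurve a x φ t)

/-- The curve `φ` with derivative `φ'` minimizes the action and its action is finite. -/
structure IsFiniteMinimizer (m : Fin N → ℝ) (a x : Conf d N) (φ φ' : ℝ → Conf d N) : Prop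
    extends HasFiniteAction m a x φ φ' where
  integral_le : ∀ ψ ψ', HasFiniteAction m a x ψ ψ' →
    ∫ t in Ioi 1, hypIntegrand m a x φ φ' t ≤ ∫ t in Ioi 1, hypIntegrand m a x ψ ψ' t

variable {m : Fin N → ℝ} {a x : Conf d N} {φ φ' ψ ψ' : ℝ → Conf d N}

lemma HasFiniteAction.hypAction_eq (h : HasFiniteAction m a x φ φ') :
    hypAction m a x ⊤ φ φ' = ((∫ t in Ioi 1, hypIntegrand m a x φ φ' t : ℝ) : EReal) := by
  rw [hypAction, timeSet_top, if_pos ⟨h.integrableOn_hypIntegrand, h.ae_not_collision⟩]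

lemma InD.hasFiniteAction (h : InD m 1 ⊤ φ φ') (hfin : hypAction m a x ⊤ φ φ' ≠ ⊤) :
    HasFiniteAction m a x φ φ' := by
  rw [hypAction, timeSet_top] at hfin
  by_contra hnot
  exact hfin (if_neg fun hc => hnot ⟨h, hc.1, hc.2⟩)

lemma HasFiniteAction.hypInf_le (h : HasFiniteAction m a x φ φ') :
    hypInf m a x ⊤ ≤ ((∫ t in Ioi 1, hypIntegrand m a x φ φ' t : ℝ) : EReal) :=
  h.hypAction_eq ▸ iInf_le_of_le φ (iInf_le_of_le φ' (iInf_le _ h.inD))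

lemma HasFiniteAction.isFiniteMinimizer (k : HasFiniteAction m a x ψ ψ') (h : InD m 1 ⊤ φ φ')
    (hmin : hypAction m a x ⊤ φ φ' = hypInf m a x ⊤) : IsFiniteMinimizer m a x φ φ' := by
  have hfin : HasFiniteAction m a x φ φ' := h.hasFiniteAction
    (hmin ▸ (k.hypInf_le.trans_lt (EReal.coe_lt_top _)).ne)
  refine ⟨hfin, fun χ χ' l => ?_⟩
  have hle := l.hypInf_le
  rwa [← hmin, hfin.hypAction_eq, EReal.coe_le_coe_iff] at hle

lemma HasFiniteAction.integrableOn_U_sub (h : HasFiniteAction m a x φ φ') :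
    IntegrableOn (fun t => U m (hypCurve a x φ t) - U m (t • a)) (Ioi 1) := by
  refine (h.integrableOn_hypIntegrand.sub (h.inD.integrableOn_sq.div_const 2)).congr
    (ae_of_all _ fun t => ?_)
  simp only [hypIntegrand, Pi.sub_apply]
  ring

lemma integrableOn_U_smul_Ioc (m : Fin N → ℝ) (a : Conf d N) {s : ℝ} (hs : 1 ≤ s) (t : ℝ) :
    IntegrableOn (fun u : ℝ => U m (u • a)) (Ioc s t) := by
  have hcont : ContinuousOn (fun u : ℝ => u⁻¹ * U m a) (Icc s t) :=
    (continuousOn_inv₀.mono fun u hu => ne_of_gt (by linarith [hu.1])).mul continuousOn_const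
  exact (hcont.integrableOn_Icc.mono_set Ioc_subset_Icc_self).congr_fun
    (fun u hu => (U_smul m a (by linarith [hu.1])).symm) measurableSet_Ioc

lemma HasFiniteAction.integrableOn_U (h : HasFiniteAction m a x φ φ') {s : ℝ} (hs : 1 ≤ s)
    (t : ℝ) : IntegrableOn (fun u => U m (hypCurve a x φ u)) (Ioc s t) :=
  ((h.integrableOn_U_sub.mono_set (Ioc_subset_Ioi_of_le hs t)).add
    (integrableOn_U_smul_Ioc m a hs t)).congr (ae_of_all _ fun u => by
      simp only [Pi.add_apply, sub_add_cancel])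

lemma HasFiniteAction.lintegral_potE_eq (hm : ∀ i, 0 < m i) (h : HasFiniteAction m a x φ φ')
    {s : ℝ} (hs : 1 ≤ s) (t : ℝ) : ∫⁻ u in Ioc s t, potE m (hypCurve a x φ u) =
      ENNReal.ofReal (∫ u in Ioc s t, U m (hypCurve a x φ u)) :=
  NBodyHJ.lintegral_potE_eq hm
    (ae_restrict_of_ae_restrict_of_subset (Ioc_subset_Ioi_of_le hs t) h.ae_not_collision)
    (h.integrableOn_U hs t)

lemma HasFiniteAction.add (hm : ∀ i, 0 < m i) (h : HasFiniteAction m a x φ φ')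
    (k : InD m 1 ⊤ ψ ψ') {s t : ℝ} (hs : 1 ≤ s) (hout : ∀ u ∉ Ioc s t, ψ u = 0)
    (hpot : ∫⁻ u in Ioc s t, potE m (hypCurve a x (φ + ψ) u) ≠ ⊤) :
    HasFiniteAction m a x (φ + ψ) (φ' + ψ') := by
  have hD := h.inD.add hm k
  have hmeas : AEMeasurable (hypCurve a x (φ + ψ)) (volume.restrict (Ioc s t)) :=
    ((hD.continuousOn_hypCurve a x).mono ((Ioc_subset_Ioi_of_le hs t).trans
      Ioi_subset_Ici_self)).aemeasurable measurableSet_Ioc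
  have heq : ∀ u ∉ Ioc s t, hypCurve a x (φ + ψ) u = hypCurve a x φ u := fun u hu => by
    rw [hypCurve_add, hout u hu, add_zero]
  refine ⟨hD, ?_, ?_⟩
  · have hdiff : IntegrableOn (fun u => U m (hypCurve a x (φ + ψ) u) - U m (hypCurve a x φ u))
        (Ioi 1) := by
      refine ((integrableOn_U_of_lintegral_potE_ne_top hm hmeas hpot).sub
        (h.integrableOn_U hs t)).of_forall_sdiff_eq_zero measurableSet_Ioi fun u hu => ?_
      simp only [Pi.sub_apply, heq u hu.2, sub_self]
    refine (((hD.integrableOn_sq.div_const 2).add hdiff).add h.integrableOn_U_sub).congr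
      (ae_of_all _ fun u => ?_)
    simp only [hypIntegrand, Pi.add_apply]
    ring
  · have hcol := h.ae_not_collision
    have hcolI := ae_not_collision_of_lintegral_potE_ne_top hm hmeas hpot
    rw [ae_restrict_iff' measurableSet_Ioi] at hcol ⊢
    rw [ae_restrict_iff' measurableSet_Ioc] at hcolI
    filter_upwards [hcol, hcolI] with u hu huI hu1
    by_cases hI : u ∈ Ioc s t
    · exact huI hI
    · exact heq u hI ▸ hu hu1

lemma hypIntegrand_add_add_hypIntegrand_sub (hm : ∀ i, 0 < m i) (t : ℝ) :
    hypIntegrand m a x (φ + ψ) (φ' + ψ') t + hypIntegrand m a x (φ + -ψ) (φ' + -ψ') t -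
      2 * hypIntegrand m a x φ φ' t = mnorm m (ψ' t) ^ 2 +
      (U m (hypCurve a x (φ + ψ) t) + U m (hypCurve a x (φ + -ψ) t) -
        2 * U m (hypCurve a x φ t)) := by
  have := mnorm_add_sq_add_mnorm_sub_sq hm (φ' t) (ψ' t)
  simp only [hypIntegrand, Pi.add_apply, Pi.neg_apply, ← sub_eq_add_neg] at this ⊢
  linarith

lemma IsFiniteMinimizer.two_mul_integral_U_le (hm : ∀ i, 0 < m i)
    (h : IsFiniteMinimizer m a x φ φ') (k : InD m 1 ⊤ ψ ψ') {s t : ℝ} (hs : 1 ≤ s)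
    (hout : ∀ u ∉ Ioc s t, ψ u = 0) (hplus : HasFiniteAction m a x (φ + ψ) (φ' + ψ'))
    (hminus : HasFiniteAction m a x (φ + -ψ) (φ' + -ψ')) :
    2 * ∫ u in Ioc s t, U m (hypCurve a x φ u) ≤
      (∫ u in Ioc s t, U m (hypCurve a x (φ + ψ) u)) +
      (∫ u in Ioc s t, U m (hypCurve a x (φ + -ψ) u)) + ∫ u in Ioi 1, mnorm m (ψ' u) ^ 2 := by
  have hsum : IntegrableOn (fun u => U m (hypCurve a x (φ + ψ) u) +
      U m (hypCurve a x (φ + -ψ) u)) (Ioc s t) :=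
    (hplus.integrableOn_U hs t).add (hminus.integrableOn_U hs t)
  have hdiff : IntegrableOn (fun u => U m (hypCurve a x (φ + ψ) u) +
      U m (hypCurve a x (φ + -ψ) u) - 2 * U m (hypCurve a x φ u)) (Ioc s t) :=
    hsum.sub ((h.integrableOn_U hs t).const_mul 2)
  have hzero : ∀ u ∈ Ioi (1 : ℝ) \ Ioc s t, U m (hypCurve a x (φ + ψ) u) +
      U m (hypCurve a x (φ + -ψ) u) - 2 * U m (hypCurve a x φ u) = 0 := fun u hu => by
    rw [hypCurve_add, hypCurve_add, Pi.neg_apply, hout u hu.2, neg_zero, add_zero]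
    ring
  have hsecond : 0 ≤ ∫ u in Ioi 1, (hypIntegrand m a x (φ + ψ) (φ' + ψ') u +
      hypIntegrand m a x (φ + -ψ) (φ' + -ψ') u - 2 * hypIntegrand m a x φ φ' u) := by
    rw [integral_sub (hplus.integrableOn_hypIntegrand.fun_add hminus.integrableOn_hypIntegrand)
      (h.integrableOn_hypIntegrand.const_mul 2), integral_add hplus.integrableOn_hypIntegrand
      hminus.integrableOn_hypIntegrand, integral_const_mul]
    linarith [h.integral_le _ _ hplus, h.integral_le _ _ hminus]
  simp only [hypIntegrand_add_add_hypIntegrand_sub hm] at hsecond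
  rw [integral_add k.integrableOn_sq (hdiff.of_forall_sdiff_eq_zero measurableSet_Ioi hzero),
    setIntegral_eq_of_subset_of_forall_sdiff_eq_zero measurableSet_Ioi
      (Ioc_subset_Ioi_of_le hs t) hzero,
    integral_sub hsum ((h.integrableOn_U hs t).const_mul 2),
    integral_add (hplus.integrableOn_U hs t) (hminus.integrableOn_U hs t),
    integral_const_mul] at hsecond
  linarith

lemma IsFiniteMinimizer.two_mul_lintegral_potE_le (hm : ∀ i, 0 < m i)
    (h : IsFiniteMinimizer m a x φ φ') (k : InD m 1 ⊤ ψ ψ') {s t : ℝ} (hs : 1 ≤ s)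
    (hout : ∀ u ∉ Ioc s t, ψ u = 0) :
    2 * ∫⁻ u in Ioc s t, potE m (hypCurve a x φ u) ≤
      (∫⁻ u in Ioc s t, potE m (hypCurve a x φ u + ψ u)) +
      (∫⁻ u in Ioc s t, potE m (hypCurve a x φ u - ψ u)) +
      ENNReal.ofReal (∫ u in Ioi 1, mnorm m (ψ' u) ^ 2) := by
  simp only [sub_eq_add_neg, ← Pi.neg_apply ψ, ← hypCurve_add]
  by_cases hp : ∫⁻ u in Ioc s t, potE m (hypCurve a x (φ + ψ) u) = ⊤
  · simp only [hp, top_add, le_top]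
  by_cases hq : ∫⁻ u in Ioc s t, potE m (hypCurve a x (φ + -ψ) u) = ⊤
  · simp only [hq, add_top, top_add, le_top]
  have hplus := h.add hm k hs hout hp
  have hminus := h.add hm k.neg hs (fun u hu => by rw [Pi.neg_apply, hout u hu, neg_zero]) hq
  have hnonneg : ∀ γ : ℝ → Conf d N, 0 ≤ ∫ u in Ioc s t, U m (γ u) := fun γ =>
    integral_nonneg fun u => U_nonneg hm _
  rw [h.lintegral_potE_eq hm hs, hplus.lintegral_potE_eq hm hs, hminus.lintegral_potE_eq hm hs,
    ← ENNReal.ofReal_add (hnonneg _) (hnonneg _), ← ENNReal.ofReal_add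
      (add_nonneg (hnonneg _) (hnonneg _)) (integral_nonneg fun _ => sq_nonneg _),
    two_mul, ← ENNReal.ofReal_add (hnonneg _) (hnonneg _), ← two_mul]
  exact ENNReal.ofReal_le_ofReal (h.two_mul_integral_U_le hm k hs hout hplus hminus)

end FiniteAction

section Variations

lemma mnorm_zero (m : Fin N → ℝ) : mnorm m (0 : Conf d N) = 0 := by simp [mnorm, minner]

lemma mnorm_smul_sq (m : Fin N → ℝ) (r : ℝ) (x : Conf d N) :
    mnorm m (r • x) ^ 2 = r ^ 2 * mnorm m x ^ 2 := by
  have hinner : minner m (r • x) (r • x) = r ^ 2 * minner m x x := by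
    simp only [minner, Pi.smul_apply, real_inner_smul_left, real_inner_smul_right, Finset.mul_sum]
    exact Finset.sum_congr rfl fun i _ => by ring
  rw [mnorm, mnorm, hinner, Real.sqrt_mul (sq_nonneg r), mul_pow, Real.sq_sqrt (sq_nonneg r)]

/-- The function rising linearly from `0` to `c - b` on `[b, c]` and constant elsewhere. -/
def ramp (b c t : ℝ) : ℝ := max 0 (min t c - b)

lemma continuous_ramp (b c : ℝ) : Continuous (ramp b c) := by
  unfold ramp
  fun_prop

lemma ramp_of_le {b c t : ℝ} (ht : t ≤ b) : ramp b c t = 0 :=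
  max_eq_left (by linarith [min_le_left t c])

lemma ramp_of_mem_Icc {b c t : ℝ} (ht : t ∈ Icc b c) : ramp b c t = t - b := by
  rw [ramp, min_eq_left ht.2, max_eq_right (by linarith [ht.1])]

lemma ramp_of_ge {b c t : ℝ} (hbc : b ≤ c) (ht : c ≤ t) : ramp b c t = c - b := by
  rw [ramp, min_eq_right ht, max_eq_right (by linarith)]

variable {m : Fin N → ℝ} {w : Conf d N} {b₀ b : ℝ}

lemma inX.smul (hw : inX m w) (r : ℝ) : inX m (r • w) := by
  unfold inX at hw ⊢
  simp only [Pi.smul_apply, smul_comm (m _) r, ← Finset.smul_sum, hw, smul_zero]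

lemma inD_ramp_smul (hw : inX m w) (hb : b₀ ≤ b) (c : ℝ) :
    InD m b₀ ⊤ (fun t => ramp b c t • w) ((Ioc b c).indicator fun _ => w) := by
  refine ⟨?_, fun t _ _ => hw.smul _, fun t _ _ => ?_, fun t _ _ =>
    (integrableOn_const (by simp)).indicator measurableSet_Ioc, ?_⟩
  · simp only [ramp_of_le hb, zero_smul]
  · rw [setIntegral_indicator measurableSet_Ioc, Ioc_inter_Ioc, sup_eq_right.2 hb,
      setIntegral_const, Real.volume_real_Ioc, max_comm]
    rfl
  · have hsq : (fun t => mnorm m ((Ioc b c).indicator (fun _ => w) t) ^ 2) =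
        (Ioc b c).indicator fun _ => mnorm m w ^ 2 :=
      indicator_comp_of_zero (g := fun v => mnorm m v ^ 2) (by simp [mnorm_zero]) |>.symm
    rw [hsq]
    exact ((integrable_indicator_iff measurableSet_Ioc).2
      (integrableOn_const (by simp))).integrableOn

/-- The tent function of height one centred at `t₀` with half-width `τ`. -/
def tent (t₀ τ t : ℝ) : ℝ := τ⁻¹ * (ramp (t₀ - τ) t₀ t - ramp t₀ (t₀ + τ) t)

variable {t₀ τ t : ℝ}

lemma continuous_tent (t₀ τ : ℝ) : Continuous (tent t₀ τ) :=
  continuous_const.mul ((continuous_ramp _ _).sub (continuous_ramp _ _))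

lemma tent_of_notMem (hτ : 0 ≤ τ) (ht : t ∉ Ioc (t₀ - τ) (t₀ + τ)) : tent t₀ τ t = 0 := by
  rcases le_or_gt t (t₀ - τ) with hle | hgt
  · rw [tent, ramp_of_le hle, ramp_of_le (by linarith), sub_zero, mul_zero]
  · have hge : t₀ + τ ≤ t := le_of_not_ge fun h => ht ⟨hgt, h⟩
    rw [tent, ramp_of_ge (by linarith) (by linarith), ramp_of_ge (by linarith) hge]
    ring

lemma half_le_tent (hτ : 0 < τ) (ht : t ∈ Icc t₀ (t₀ + τ / 2)) : 1 / 2 ≤ tent t₀ τ t := by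
  rw [tent, ramp_of_ge (by linarith) ht.1, ramp_of_mem_Icc ⟨ht.1, by linarith [ht.2]⟩,
    inv_mul_eq_div, le_div_iff₀ hτ]
  linarith [ht.2]

lemma exists_inD_tent_smul (hm : ∀ i, 0 < m i) (hw : inX m w) (hτ : 0 < τ) (hb : b₀ ≤ t₀ - τ) :
    ∃ ψ', InD m b₀ ⊤ (fun t => tent t₀ τ t • w) ψ' ∧
      ∫ t in Ioi b₀, mnorm m (ψ' t) ^ 2 = 2 / τ * mnorm m w ^ 2 := by
  have hrise := inD_ramp_smul (hw.smul τ⁻¹) hb t₀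
  have hfall := inD_ramp_smul ((hw.smul τ⁻¹).smul (-1)) (by linarith : b₀ ≤ t₀) (t₀ + τ)
  refine ⟨((Ioc (t₀ - τ) t₀).indicator fun _ => τ⁻¹ • w) +
    (Ioc t₀ (t₀ + τ)).indicator fun _ => (-1 : ℝ) • τ⁻¹ • w, ?_, ?_⟩
  · convert hrise.add hm hfall using 2 with t
    simp only [tent, Pi.add_apply]
    module
  have hsq : ∀ t, mnorm m (((Ioc (t₀ - τ) t₀).indicator fun _ => τ⁻¹ • w) t +
      ((Ioc t₀ (t₀ + τ)).indicator fun _ => (-1 : ℝ) • τ⁻¹ • w) t) ^ 2 =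
      (Ioc (t₀ - τ) (t₀ + τ)).indicator (fun _ => τ⁻¹ ^ 2 * mnorm m w ^ 2) t := fun t => by
    rw [← Ioc_union_Ioc_eq_Ioc (by linarith : t₀ - τ ≤ t₀) (by linarith : t₀ ≤ t₀ + τ)]
    by_cases hl : t ∈ Ioc (t₀ - τ) t₀
    · have hr : t ∉ Ioc t₀ (t₀ + τ) := fun hr => absurd hl.2 (not_le.2 hr.1)
      rw [indicator_of_mem hl, indicator_of_notMem hr, indicator_of_mem (mem_union_left _ hl),
        add_zero, mnorm_smul_sq]
    by_cases hr : t ∈ Ioc t₀ (t₀ + τ)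
    · rw [indicator_of_notMem hl, indicator_of_mem hr, indicator_of_mem (mem_union_right _ hr),
        zero_add, mnorm_smul_sq, mnorm_smul_sq]
      ring
    · rw [indicator_of_notMem hl, indicator_of_notMem hr,
        indicator_of_notMem (fun h => h.elim hl hr), add_zero, mnorm_zero, zero_pow two_ne_zero]
  simp only [Pi.add_apply, hsq]
  rw [setIntegral_indicator measurableSet_Ioc, inter_eq_right.2 (Ioc_subset_Ioi_of_le hb _),
    setIntegral_const, Real.volume_real_Ioc_of_le (by linarith), smul_eq_mul]
  field_simp
  ring

end Variations

section Averaging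

/-- The configuration whose particles all lie on the line through `ξ`, with coefficients `c`. -/
def lineConf (c : Fin N → ℝ) (ξ : EuclideanSpace ℝ (Fin d)) : Conf d N := fun k => c k • ξ

lemma inX_lineConf {m c : Fin N → ℝ} (hc : ∑ k, m k * c k = 0) (ξ : EuclideanSpace ℝ (Fin d)) :
    inX m (lineConf c ξ) := by
  simp only [inX, lineConf, smul_smul, ← Finset.sum_smul, hc, zero_smul]

lemma mnorm_lineConf_sq {m : Fin N → ℝ} (hm : ∀ i, 0 < m i) (c : Fin N → ℝ)
    (ξ : EuclideanSpace ℝ (Fin d)) :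
    mnorm m (lineConf c ξ) ^ 2 = (∑ k, m k * c k ^ 2) * ‖ξ‖ ^ 2 := by
  rw [mnorm_sq hm, Finset.sum_mul]
  refine Finset.sum_congr rfl fun k _ => ?_
  rw [lineConf, norm_smul, mul_pow, Real.norm_eq_abs, sq_abs, mul_assoc]

lemma continuous_lineConf (c : Fin N → ℝ) :
    Continuous (lineConf c : EuclideanSpace ℝ (Fin d) → Conf d N) := by
  unfold lineConf
  fun_prop

lemma smul_lineConf (f : ℝ) (c : Fin N → ℝ) (ξ : EuclideanSpace ℝ (Fin d)) :
    f • lineConf c ξ = lineConf (f • c) ξ :=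
  funext fun k => smul_smul f (c k) ξ

lemma lineConf_sub (c : Fin N → ℝ) (ξ : EuclideanSpace ℝ (Fin d)) (k l : Fin N) :
    lineConf c ξ k - lineConf c ξ l = (c k - c l) • ξ :=
  (sub_smul _ _ _).symm

variable {m c : Fin N → ℝ} {ν : Measure (EuclideanSpace ℝ (Fin d))} {i j : Fin N} {δ : ℝ≥0∞}

lemma lintegral_potE_add_lineConf_add_le
    (hν : ∀ (f : ℝ) (y : EuclideanSpace ℝ (Fin d)), ∫⁻ ξ, ‖y + f • ξ‖ₑ⁻¹ ∂ν ≤ ‖y‖ₑ⁻¹)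
    (m c : Fin N → ℝ) (x : Conf d N) (hij : i < j)
    (hδ : ∫⁻ ξ, ‖x i - x j + (c i - c j) • ξ‖ₑ⁻¹ ∂ν + δ ≤ ‖x i - x j‖ₑ⁻¹) :
    ∫⁻ ξ, potE m (x + lineConf c ξ) ∂ν + ENNReal.ofReal (m i * m j) * δ ≤ potE m x := by
  have hmeas : ∀ k l : Fin N, Measurable fun ξ : EuclideanSpace ℝ (Fin d) =>
      if k < l then ENNReal.ofReal (m k * m l) * ‖x k - x l + (c k - c l) • ξ‖ₑ⁻¹ else 0 :=
    fun k l => by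
      split_ifs
      · exact Measurable.const_mul (by fun_prop) _
      · exact measurable_const
  have hsum : ENNReal.ofReal (m i * m j) * δ = ∑ k : Fin N, ∑ l : Fin N,
      if k = i ∧ l = j then ENNReal.ofReal (m i * m j) * δ else 0 := by
    simp [ite_and]
  simp only [potE, Pi.add_apply, add_sub_add_comm, lineConf_sub]
  rw [lintegral_finsetSum _ fun k _ => Finset.measurable_sum _ fun l _ => hmeas k l, hsum,
    ← Finset.sum_add_distrib]
  refine Finset.sum_le_sum fun k _ => ?_
  rw [lintegral_finsetSum _ fun l _ => hmeas k l, ← Finset.sum_add_distrib]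
  refine Finset.sum_le_sum fun l _ => ?_
  by_cases hkl : k < l
  · simp only [if_pos hkl]
    rw [lintegral_const_mul' _ _ ENNReal.ofReal_ne_top]
    split_ifs with heq
    · obtain ⟨rfl, rfl⟩ := heq
      rw [← mul_add]
      gcongr
    · rw [add_zero]
      gcongr
      exact hν _ _
  · have hne : ¬ (k = i ∧ l = j) := fun h => hkl (h.1 ▸ h.2 ▸ hij)
    simp only [if_neg hkl, if_neg hne, lintegral_zero, add_zero, le_refl]

lemma aemeasurable_potE_add_smul_lineConf [SFinite ν] {I : Set ℝ} {Γ : ℝ → Conf d N} {f : ℝ → ℝ}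
    (hΓ : AEMeasurable Γ (volume.restrict I)) (hf : Measurable f) :
    AEMeasurable (Function.uncurry fun ξ t => potE m (Γ t + f t • lineConf c ξ))
      (ν.prod (volume.restrict I)) :=
  (measurable_potE m).comp_aemeasurable <| hΓ.comp_snd.add <|
    ((hf.comp measurable_snd).smul
      ((continuous_lineConf c).measurable.comp measurable_fst)).aemeasurable

lemma lintegral_lintegral_potE_add_smul_lineConf_add_le [SFinite ν]
    (hν : ∀ (f : ℝ) (y : EuclideanSpace ℝ (Fin d)), ∫⁻ ξ, ‖y + f • ξ‖ₑ⁻¹ ∂ν ≤ ‖y‖ₑ⁻¹)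
    (hij : i < j) {I J : Set ℝ} (hJ : MeasurableSet J) (hJI : J ⊆ I) {Γ : ℝ → Conf d N}
    {f : ℝ → ℝ} (hΓ : AEMeasurable Γ (volume.restrict I)) (hf : Measurable f)
    (hδ : ∀ t ∈ J, ∫⁻ ξ, ‖Γ t i - Γ t j + (f t * (c i - c j)) • ξ‖ₑ⁻¹ ∂ν + δ ≤
      ‖Γ t i - Γ t j‖ₑ⁻¹) :
    ∫⁻ ξ, (∫⁻ t in I, potE m (Γ t + f t • lineConf c ξ)) ∂ν +
      ENNReal.ofReal (m i * m j) * δ * volume J ≤ ∫⁻ t in I, potE m (Γ t) := by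
  have hgain : ENNReal.ofReal (m i * m j) * δ * volume J =
      ∫⁻ t in I, ENNReal.ofReal (m i * m j) * J.indicator (fun _ => δ) t := by
    rw [lintegral_const_mul' _ _ ENNReal.ofReal_ne_top, lintegral_indicator hJ,
      Measure.restrict_restrict hJ, inter_eq_left.2 hJI, setLIntegral_const, mul_assoc]
  rw [lintegral_lintegral_swap (aemeasurable_potE_add_smul_lineConf hΓ hf), hgain,
    ← lintegral_add_right _ ((measurable_const.indicator hJ).const_mul _)]
  refine lintegral_mono fun t => ?_
  simp only [smul_lineConf]
  refine lintegral_potE_add_lineConf_add_le hν m (f t • c) (Γ t) hij ?_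
  simp only [Pi.smul_apply, smul_eq_mul, ← mul_sub]
  by_cases ht : t ∈ J
  · rw [indicator_of_mem ht]
    exact hδ t ht
  · rw [indicator_of_notMem ht, add_zero]
    exact hν _ _

lemma two_mul_lintegral_potE_mul_measure_univ_add_le [SFinite ν]
    (hν : ∀ (f : ℝ) (y : EuclideanSpace ℝ (Fin d)), ∫⁻ ξ, ‖y + f • ξ‖ₑ⁻¹ ∂ν ≤ ‖y‖ₑ⁻¹)
    (hij : i < j) {I J : Set ℝ} (hJ : MeasurableSet J) (hJI : J ⊆ I) {Γ : ℝ → Conf d N}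
    {f : ℝ → ℝ} (hΓ : AEMeasurable Γ (volume.restrict I)) (hf : Measurable f)
    (hδ : ∀ t ∈ J, ∀ r : ℝ, |r| = |f t * (c i - c j)| →
      ∫⁻ ξ, ‖Γ t i - Γ t j + r • ξ‖ₑ⁻¹ ∂ν + δ ≤ ‖Γ t i - Γ t j‖ₑ⁻¹)
    {k : EuclideanSpace ℝ (Fin d) → ℝ≥0∞}
    (hmin : ∀ ξ, 2 * ∫⁻ t in I, potE m (Γ t) ≤
      (∫⁻ t in I, potE m (Γ t + f t • lineConf c ξ)) +
      (∫⁻ t in I, potE m (Γ t - f t • lineConf c ξ)) + k ξ) :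
    2 * (∫⁻ t in I, potE m (Γ t)) * ν univ + 2 * (ENNReal.ofReal (m i * m j) * δ * volume J) ≤
      2 * (∫⁻ t in I, potE m (Γ t)) + ∫⁻ ξ, k ξ ∂ν := by
  simp only [sub_eq_add_neg (Γ _), ← neg_smul, ← Pi.neg_apply f] at hmin
  set L := ∫⁻ t in I, potE m (Γ t)
  set g := ENNReal.ofReal (m i * m j) * δ * volume J
  have hmeasf : AEMeasurable (fun ξ => ∫⁻ t in I, potE m (Γ t + f t • lineConf c ξ)) ν :=
    (aemeasurable_potE_add_smul_lineConf hΓ hf).lintegral_prod_right'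
  have hmeasg : AEMeasurable (fun ξ => ∫⁻ t in I, potE m (Γ t + (-f) t • lineConf c ξ)) ν :=
    (aemeasurable_potE_add_smul_lineConf hΓ hf.neg).lintegral_prod_right'
  have hplus := lintegral_lintegral_potE_add_smul_lineConf_add_le (m := m) hν hij hJ hJI hΓ hf
    fun t ht => hδ t ht _ rfl
  have hminus := lintegral_lintegral_potE_add_smul_lineConf_add_le (m := m) hν hij hJ hJI hΓ hf.neg
    fun t ht => hδ t ht _ (by rw [Pi.neg_apply, neg_mul, abs_neg])
  calc 2 * L * ν univ + 2 * g = ∫⁻ _, 2 * L ∂ν + 2 * g := by rw [lintegral_const]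
    _ ≤ (∫⁻ ξ, ((∫⁻ t in I, potE m (Γ t + f t • lineConf c ξ)) +
          (∫⁻ t in I, potE m (Γ t + (-f) t • lineConf c ξ)) + k ξ) ∂ν) + 2 * g := by
        gcongr with ξ
        exact hmin ξ
    _ = (∫⁻ ξ, (∫⁻ t in I, potE m (Γ t + f t • lineConf c ξ)) ∂ν + g) +
          (∫⁻ ξ, (∫⁻ t in I, potE m (Γ t + (-f) t • lineConf c ξ)) ∂ν + g) + ∫⁻ ξ, k ξ ∂ν := by
        rw [lintegral_add_left' (hmeasf.fun_add hmeasg), lintegral_add_left' hmeasf]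
        ring
    _ ≤ L + L + ∫⁻ ξ, k ξ ∂ν := by gcongr
    _ = 2 * L + ∫⁻ ξ, k ξ ∂ν := by rw [two_mul]

lemma le_two_mul_mul_add_of_le_add {L : ℝ≥0∞} {h M A B : ℝ} (hh : 0 ≤ h) (hM : 0 ≤ M)
    (hB : 0 ≤ B) (hL : L ≤ ENNReal.ofReal M)
    (hle : 2 * L * ENNReal.ofReal (1 - h) + ENNReal.ofReal A ≤ 2 * L + ENNReal.ofReal B) :
    A ≤ 2 * h * M + B := by
  have hLtop : L ≠ ⊤ := ne_top_of_le_ne_top ENNReal.ofReal_ne_top hL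
  have hLM := ENNReal.toReal_le_of_le_ofReal hM hL
  have hreal := ENNReal.toReal_mono (by finiteness) hle
  rw [ENNReal.toReal_add (by finiteness) (by finiteness), ENNReal.toReal_add (by finiteness)
    (by finiteness)] at hreal
  simp only [ENNReal.toReal_mul, ENNReal.toReal_ofNat, ENNReal.toReal_ofReal hB,
    ENNReal.toReal_ofReal'] at hreal
  calc A ≤ 2 * L.toReal + B - 2 * L.toReal * (1 - h) := by
        rw [le_sub_iff_add_le']
        refine le_trans ?_ hreal
        gcongr <;> exact le_max_left _ _
    _ = 2 * h * L.toReal + B := by ring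
    _ ≤ 2 * h * M + B := by gcongr

/-- While the particles `i` and `j` are within `h / 4` of each other, averaging over
`inversionMeasure ι h` lowers the potential by at least `2 * m i * m j / h`, whereas the losses in
`hmin` are of order `h`: the missing mass of the measure, and the second moment of `ξ`. -/
lemma closeness_time_le_of_two_mul_lintegral_potE_le (hd : 2 ≤ d) (hm : ∀ i, 0 < m i) (hij : i < j)
    (hc : c i - c j = 1) {I : Set ℝ} {Γ : ℝ → Conf d N} {f : ℝ → ℝ} {h t₀ s κ M : ℝ} (hh : 0 < h)
    (hκ : 0 ≤ κ) (hM : 0 ≤ M) (hΓ : AEMeasurable Γ (volume.restrict I))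
    (hf : Measurable f) (hJ : Ioc t₀ (t₀ + s) ⊆ I)
    (hf2 : ∀ t ∈ Ioc t₀ (t₀ + s), 1 / 2 ≤ |f t|)
    (hclose : ∀ t ∈ Ioc t₀ (t₀ + s), ‖Γ t i - Γ t j‖ ≤ h / 4)
    (hpot : ∫⁻ t in I, potE m (Γ t) ≤ ENNReal.ofReal M)
    (hmin : ∀ ξ, 2 * ∫⁻ t in I, potE m (Γ t) ≤
      (∫⁻ t in I, potE m (Γ t + f t • lineConf c ξ)) +
      (∫⁻ t in I, potE m (Γ t - f t • lineConf c ξ)) + ENNReal.ofReal (κ * ‖ξ‖ ^ 2)) :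
    4 * (m i * m j) * s ≤ (2 * M + κ) * h ^ 2 := by
  obtain ⟨ι⟩ := exists_linearIsometry_complex (V := EuclideanSpace ℝ (Fin d)) (by simpa using hd)
  have : IsFiniteMeasure (inversionMeasure ι h) :=
    ⟨inversionMeasure_univ ι hh ▸ ENNReal.ofReal_lt_top⟩
  have haverage := two_mul_lintegral_potE_mul_measure_univ_add_le
    (lintegral_enorm_add_inv_inversionMeasure_le ι hh) hij measurableSet_Ioc hJ hΓ hf
    (fun t ht r hr => lintegral_enorm_add_inv_inversionMeasure_add_le ι hh
      (by rw [hr, hc, mul_one]; exact hf2 t ht) (hclose t ht)) hmin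
  have hkin : ∫⁻ ξ, ENNReal.ofReal (κ * ‖ξ‖ ^ 2) ∂inversionMeasure ι h ≤
      ENNReal.ofReal (κ * h) := by
    simp only [ENNReal.ofReal_mul hκ]
    rw [lintegral_const_mul' _ _ ENNReal.ofReal_ne_top]
    gcongr
    exact lintegral_sq_norm_inversionMeasure_le ι hh
  have hgain : 2 * (ENNReal.ofReal (m i * m j) * ENNReal.ofReal (2 / h) *
      volume (Ioc t₀ (t₀ + s))) = ENNReal.ofReal (2 * (m i * m j * (2 / h) * s)) := by
    have hmm := (mul_pos (hm i) (hm j)).le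
    rw [Real.volume_Ioc, add_sub_cancel_left, ← ENNReal.ofReal_mul hmm,
      ← ENNReal.ofReal_mul (by positivity), ENNReal.ofReal_mul zero_le_two, ENNReal.ofReal_ofNat]
  rw [inversionMeasure_univ ι hh, hgain] at haverage
  have hmain := le_two_mul_mul_add_of_le_add (L := ∫⁻ t in I, potE m (Γ t)) hh.le hM
    (mul_nonneg hκ hh.le) hpot (haverage.trans (add_le_add_right hkin _))
  calc 4 * (m i * m j) * s = 2 * (m i * m j * (2 / h) * s) * h := by field_simp; ring
    _ ≤ (2 * h * M + κ * h) * h := by gcongr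
    _ = (2 * M + κ) * h ^ 2 := by ring

end Averaging

section InteriorBound

variable {m : Fin N → ℝ} {i j : Fin N}

lemma exists_centred_sub_eq_one (hm : ∀ i, 0 < m i) (hij : i ≠ j) :
    ∃ c : Fin N → ℝ, ∑ k, m k * c k = 0 ∧ c i - c j = 1 := by
  have hmi := hm i
  have hmj := hm j
  refine ⟨fun k => (if k = i then m j / (m i + m j) else 0) +
    if k = j then -(m i / (m i + m j)) else 0, ?_, ?_⟩
  · simp only [mul_add, mul_ite, mul_zero, Finset.sum_add_distrib, Finset.sum_ite_eq',
      Finset.mem_univ, if_true]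
    ring
  · simp only [if_true, if_neg hij, if_neg hij.symm]
    field_simp
    ring

variable {a x : Conf d N} {φ φ' : ℝ → Conf d N} {c : Fin N → ℝ} {t₀ τ s η M : ℝ}

lemma IsFiniteMinimizer.mul_le_of_norm_le (hd : 2 ≤ d) (hm : ∀ i, 0 < m i)
    (h : IsFiniteMinimizer m a x φ φ') (hij : i < j) (hc : ∑ k, m k * c k = 0)
    (hcij : c i - c j = 1) (hτ : 0 < τ) (ht₀ : 1 ≤ t₀ - τ) (hM : 0 ≤ M)
    (hpot : ∫⁻ t in Ioc (t₀ - τ) (t₀ + τ), potE m (hypCurve a x φ t) ≤ ENNReal.ofReal M)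
    (hη : 0 < η) (hs : 0 < s) (hsτ : s ≤ τ / 2)
    (hclose : ∀ t ∈ Icc t₀ (t₀ + s), ‖hypCurve a x φ t i - hypCurve a x φ t j‖ ≤ η * √s) :
    m i * m j ≤ 4 * (2 * M + 2 / τ * ∑ k, m k * c k ^ 2) * η ^ 2 := by
  have hκ : 0 ≤ 2 / τ * ∑ k, m k * c k ^ 2 := mul_nonneg (by positivity)
    (Finset.sum_nonneg fun k _ => mul_nonneg (hm k).le (sq_nonneg _))
  have hmeas : AEMeasurable (hypCurve a x φ) (volume.restrict (Ioc (t₀ - τ) (t₀ + τ))) :=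
    ((h.inD.continuousOn_hypCurve a x).mono ((Ioc_subset_Ioi_of_le ht₀ _).trans
      Ioi_subset_Ici_self)).aemeasurable measurableSet_Ioc
  have hsecond : ∀ ξ, 2 * ∫⁻ t in Ioc (t₀ - τ) (t₀ + τ), potE m (hypCurve a x φ t) ≤
      (∫⁻ t in Ioc (t₀ - τ) (t₀ + τ), potE m (hypCurve a x φ t + tent t₀ τ t • lineConf c ξ)) +
      (∫⁻ t in Ioc (t₀ - τ) (t₀ + τ), potE m (hypCurve a x φ t - tent t₀ τ t • lineConf c ξ)) +
      ENNReal.ofReal (2 / τ * (∑ k, m k * c k ^ 2) * ‖ξ‖ ^ 2) := fun ξ => by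
    obtain ⟨ψ', hψ, hψ'⟩ := exists_inD_tent_smul hm (inX_lineConf hc ξ) hτ ht₀
    rw [mul_assoc, ← mnorm_lineConf_sq hm, ← hψ']
    exact h.two_mul_lintegral_potE_le hm hψ ht₀ fun u hu => by
      rw [tent_of_notMem hτ.le hu, zero_smul]
  have hmain := closeness_time_le_of_two_mul_lintegral_potE_le (t₀ := t₀) (s := s)
    (h := 4 * η * √s) hd hm hij hcij (by positivity) hκ hM hmeas (continuous_tent t₀ τ).measurable
    (Ioc_subset_Ioc (by linarith) (by linarith))
    (fun t ht => (half_le_tent hτ ⟨ht.1.le, by linarith [ht.2]⟩).trans (le_abs_self _))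
    (fun t ht => (hclose t (Ioc_subset_Icc_self ht)).trans_eq (by ring)) hpot hsecond
  rw [mul_pow, Real.sq_sqrt hs.le] at hmain
  nlinarith

lemma exists_pos_le_norm_sub_of_isFiniteMinimizer {μ E : ℝ} (hd : 2 ≤ d) (hμ : 0 < μ)
    (hμm : ∀ i, μ ≤ m i) (a : Conf d N) (hij : i ≠ j) (hτ : 0 < τ) (hE : 0 ≤ E) (hM : 0 ≤ M) :
    ∃ ε > 0, ∀ (x : Conf d N) (φ φ' : ℝ → Conf d N), IsFiniteMinimizer m a x φ φ' →
      ∫ t in Ioi 1, mnorm m (φ' t) ^ 2 ≤ E → ∀ t₀, 1 ≤ t₀ - τ →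
      ∫⁻ t in Ioc (t₀ - τ) (t₀ + τ), potE m (hypCurve a x φ t) ≤ ENNReal.ofReal M →
      ε ≤ ‖hypCurve a x φ t₀ i - hypCurve a x φ t₀ j‖ := by
  wlog hlt : i < j generalizing i j
  · simpa only [norm_sub_rev] using this hij.symm (lt_of_le_of_ne (not_lt.1 hlt) hij.symm)
  have hm : ∀ i, 0 < m i := fun i => hμ.trans_le (hμm i)
  have hmm : 0 < m i * m j := mul_pos (hm i) (hm j)
  obtain ⟨c, hc, hcij⟩ := exists_centred_sub_eq_one hm hij
  have hκ : 0 ≤ 2 / τ * ∑ k, m k * c k ^ 2 := mul_nonneg (by positivity)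
    (Finset.sum_nonneg fun k _ => mul_nonneg (hm k).le (sq_nonneg _))
  set D := 4 * (2 * M + 2 / τ * ∑ k, m k * c k ^ 2)
  have : 0 ≤ D := by positivity
  set η := √(m i * m j / (D + 1))
  have hη : D * η ^ 2 < m i * m j := by
    rw [Real.sq_sqrt (by positivity), mul_div_left_comm]
    exact mul_lt_of_lt_one_right hmm ((div_lt_one (by positivity)).2 (lt_add_one D))
  obtain ⟨ε, hε, hscale⟩ := exists_hypCurve_scale_norm_le (η := η) (τ := τ / 2) hμ hμm a
    (by positivity) (by positivity) hE i j
  refine ⟨ε, hε, fun x φ φ' h hφE t₀ ht₀ hpot => ?_⟩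
  by_contra! hclose
  obtain ⟨s, hs, hsτ, hsmall⟩ := hscale x φ φ' h.inD hφE t₀ (by linarith) hclose.le
  exact hη.not_ge (h.mul_le_of_norm_le hd hm hlt hc hcij hτ ht₀ hM hpot (by positivity) hs hsτ
    hsmall)

end InteriorBound

section Energy

variable {m : Fin N → ℝ} {a x : Conf d N} {φ φ' : ℝ → Conf d N} {μ B R : ℝ}

/-- The rate at which `U` can decrease along deviations from the uniform motion `t ↦ t • a`; see
`neg_potSlope_mul_le_U_sub`. -/
def potSlope (m : Fin N → ℝ) (a : Conf d N) : ℝ :=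
  ∑ i : Fin N, ∑ j : Fin N, if i < j then m i * m j / ‖a i - a j‖ ^ 2 else 0

lemma potSlope_nonneg (hm : ∀ i, 0 < m i) (a : Conf d N) : 0 ≤ potSlope m a := by
  refine Finset.sum_nonneg fun i _ => Finset.sum_nonneg fun j _ => ?_
  have := hm i
  have := hm j
  split_ifs <;> positivity

lemma norm_smul_apply_sub (a : Conf d N) {t : ℝ} (ht : 0 < t) (i j : Fin N) :
    ‖(t • a) i - (t • a) j‖ = t * ‖a i - a j‖ := by
  rw [Pi.smul_apply, Pi.smul_apply, ← smul_sub, norm_smul, norm_of_nonneg ht.le]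

lemma norm_sub_pos_of_not_collision (hx : ¬ collision x) {i j : Fin N} (hij : i ≠ j) :
    0 < ‖x i - x j‖ :=
  norm_pos_iff.2 (sub_ne_zero.2 fun h => hx ⟨i, j, hij, h⟩)

lemma sub_div_sq_le_inv_sub_inv {p r : ℝ} (hp : 0 < p) (hr : 0 < r) :
    (p - r) / p ^ 2 ≤ r⁻¹ - p⁻¹ := by
  have hgap : r⁻¹ - p⁻¹ - (p - r) / p ^ 2 = (p - r) ^ 2 / (r * p ^ 2) := by field_simp
  have : 0 ≤ (p - r) ^ 2 / (r * p ^ 2) := by positivity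
  linarith

lemma sqrt_div_sq_eq_rpow {t : ℝ} (ht : 0 < t) : √t / t ^ 2 = t ^ (-(3 / 2) : ℝ) := by
  rw [Real.sqrt_eq_rpow, ← Real.rpow_natCast, ← Real.rpow_sub ht]
  norm_num

lemma neg_potSlope_mul_le_U_sub (hm : ∀ i, 0 < m i) (ha : ¬ collision a) (hx : ¬ collision x)
    {t S : ℝ} (ht : 0 < t) (hS : ∀ i j, ‖x i - x j - t • (a i - a j)‖ ≤ √t * S) :
    -(potSlope m a * S * t ^ (-(3 / 2) : ℝ)) ≤ U m x - U m (t • a) := by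
  rw [← sqrt_div_sq_eq_rpow ht]
  simp only [potSlope, U, Finset.sum_mul, ← Finset.sum_neg_distrib, ← Finset.sum_sub_distrib]
  refine Finset.sum_le_sum fun i _ => Finset.sum_le_sum fun j _ => ?_
  split_ifs with hij
  · have hmm := mul_pos (hm i) (hm j)
    have haij := norm_sub_pos_of_not_collision ha hij.ne
    have hxij := norm_sub_pos_of_not_collision hx hij.ne
    have hgrowth : ‖x i - x j‖ - t * ‖a i - a j‖ ≤ √t * S := by
      rw [← norm_of_nonneg ht.le, ← norm_smul, norm_of_nonneg ht.le]
      exact (norm_sub_norm_le _ _).trans (hS i j)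
    rw [norm_smul_apply_sub a ht]
    calc -(m i * m j / ‖a i - a j‖ ^ 2 * S * (√t / t ^ 2))
        = m i * m j * (-(√t * S) / (t * ‖a i - a j‖) ^ 2) := by field_simp
      _ ≤ m i * m j * ((t * ‖a i - a j‖ - ‖x i - x j‖) / (t * ‖a i - a j‖) ^ 2) := by
        gcongr
        linarith
      _ ≤ m i * m j * (‖x i - x j‖⁻¹ - (t * ‖a i - a j‖)⁻¹) := by
        gcongr
        exact sub_div_sq_le_inv_sub_inv (by positivity) hxij
      _ = m i * m j / ‖x i - x j‖ - m i * m j / (t * ‖a i - a j‖) := by ring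
  · simp only [zero_mul, neg_zero, sub_zero, le_refl]

lemma InD.norm_hypCurve_sub_smul_le (hμ : 0 < μ) (hμm : ∀ i, μ ≤ m i) (h : InD m 1 ⊤ φ φ')
    (hR : ∀ i j, ‖x i - x j - (a i - a j)‖ ≤ R) {t : ℝ} (ht : 1 ≤ t) (i j : Fin N) :
    ‖hypCurve a x φ t i - hypCurve a x φ t j - t • (a i - a j)‖ ≤
      √t * (√(2 / μ * ∫ t in Ioi 1, mnorm m (φ' t) ^ 2) + R) := by
  set E := ∫ t in Ioi 1, mnorm m (φ' t) ^ 2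
  have : 0 ≤ E := integral_nonneg fun _ => sq_nonneg _
  have hφ : ‖φ t i - φ t j‖ ≤ √t * √(2 / μ * E) := by
    rw [← Real.sqrt_mul (by linarith)]
    refine Real.le_sqrt_of_sq_le ((h.sq_norm_relative_position_le hμ hμm ht i j).trans ?_)
    gcongr
    linarith
  have hRt : R ≤ √t * R :=
    le_mul_of_one_le_left ((norm_nonneg _).trans (hR i j)) (Real.one_le_sqrt.2 ht)
  have hsplit : hypCurve a x φ t i - hypCurve a x φ t j - t • (a i - a j) =
      (φ t i - φ t j) + (x i - x j - (a i - a j)) := by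
    simp only [hypCurve, Pi.add_apply, Pi.sub_apply, Pi.smul_apply]
    module
  rw [hsplit, mul_add]
  exact (norm_add_le _ _).trans (add_le_add hφ ((hR i j).trans hRt))

/-- A bound for a quarter of the kinetic energy, and for the potential energy up to the linearly
growing contribution of the uniform motion, of curves from `x` whose action is at most `B`, when
the differences `x i - x j` are within distance `R` of `a i - a j`. -/
def energyBound (m : Fin N → ℝ) (a : Conf d N) (μ B R : ℝ) : ℝ :=
  B + 8 * potSlope m a ^ 2 / μ + 2 * potSlope m a * R

lemma two_mul_mul_sqrt_le {E : ℝ} (hμ : 0 < μ) (hE : 0 ≤ E) (C : ℝ) :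
    2 * C * √(2 / μ * E) ≤ E / 4 + 8 * C ^ 2 / μ := by
  have hsq : 0 ≤ μ / 8 * (√(2 / μ * E) - 8 * C / μ) ^ 2 := by positivity
  have hexpand : μ / 8 * (√(2 / μ * E) - 8 * C / μ) ^ 2 =
      μ / 8 * √(2 / μ * E) ^ 2 - 2 * C * √(2 / μ * E) + 8 * C ^ 2 / μ := by
    field_simp
    ring
  have hquarter : μ / 8 * (2 / μ * E) = E / 4 := by
    field_simp
    ring
  rw [hexpand, Real.sq_sqrt (by positivity), hquarter] at hsq
  linarith

/-- The deviation from the uniform motion grows at most like `√t`, so the potential along the curve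
exceeds that of the uniform motion up to an error of order `t ^ (-3 / 2)`, which is integrable; the
error is linear in the square root of the kinetic energy and is absorbed by Young's inequality. -/
lemma HasFiniteAction.exists_integral_U_sub_add_le (hμ : 0 < μ) (hμm : ∀ i, μ ≤ m i)
    (ha : ¬ collision a) (hR₀ : 0 ≤ R) (hR : ∀ i j, ‖x i - x j - (a i - a j)‖ ≤ R)
    (h : HasFiniteAction m a x φ φ') (hB : ∫ t in Ioi 1, hypIntegrand m a x φ φ' t ≤ B) :
    ∃ g : ℝ → ℝ, (∀ t ∈ Ioi 1, 0 ≤ g t) ∧ IntegrableOn g (Ioi 1) ∧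
      (∀ᵐ t ∂volume.restrict (Ioi 1), 0 ≤ U m (hypCurve a x φ t) - U m (t • a) + g t) ∧
      ∫ t in Ioi 1, (U m (hypCurve a x φ t) - U m (t • a) + g t) ≤
        energyBound m a μ B R - (∫ t in Ioi 1, mnorm m (φ' t) ^ 2) / 4 := by
  have hm : ∀ i, 0 < m i := fun i => hμ.trans_le (hμm i)
  set C := potSlope m a with hC
  set E := ∫ t in Ioi 1, mnorm m (φ' t) ^ 2 with hE
  set S := √(2 / μ * E) + R with hS
  have hpow : IntegrableOn (fun t : ℝ => C * S * t ^ (-(3 / 2) : ℝ)) (Ioi 1) :=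
    (integrableOn_Ioi_rpow_of_lt (by norm_num) one_pos).const_mul _
  have hpowint : ∫ t in Ioi (1 : ℝ), C * S * t ^ (-(3 / 2) : ℝ) = 2 * (C * S) := by
    rw [integral_const_mul, integral_Ioi_rpow_of_lt (by norm_num) one_pos]
    norm_num
    ring
  have haction : ∫ t in Ioi 1, hypIntegrand m a x φ φ' t =
      E / 2 + ∫ t in Ioi 1, (U m (hypCurve a x φ t) - U m (t • a)) := by
    rw [hE, ← integral_div, ← integral_add (h.inD.integrableOn_sq.div_const 2)
      h.integrableOn_U_sub]
    exact integral_congr_ae (ae_of_all _ fun t => by simp only [hypIntegrand]; ring)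
  have hyoung : 2 * C * √(2 / μ * E) ≤ E / 4 + 8 * C ^ 2 / μ :=
    two_mul_mul_sqrt_le hμ (integral_nonneg fun _ => sq_nonneg _) C
  refine ⟨fun t => C * S * t ^ (-(3 / 2) : ℝ), fun t ht => ?_, hpow, ?_, ?_⟩
  · have := potSlope_nonneg hm a
    have := one_pos.trans ht.out
    positivity
  · filter_upwards [h.ae_not_collision, ae_restrict_mem measurableSet_Ioi] with t hcol ht
    have := neg_potSlope_mul_le_U_sub hm ha hcol (one_pos.trans ht)
      (h.inD.norm_hypCurve_sub_smul_le hμ hμm hR ht.out.le)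
    linarith
  · rw [integral_add h.integrableOn_U_sub hpow, hpowint, energyBound, ← hC]
    have : 2 * (C * S) = 2 * C * √(2 / μ * E) + 2 * C * R := by rw [hS]; ring
    linarith

lemma HasFiniteAction.integral_mnorm_sq_le (hμ : 0 < μ) (hμm : ∀ i, μ ≤ m i)
    (ha : ¬ collision a) (hR₀ : 0 ≤ R) (hR : ∀ i j, ‖x i - x j - (a i - a j)‖ ≤ R)
    (h : HasFiniteAction m a x φ φ') (hB : ∫ t in Ioi 1, hypIntegrand m a x φ φ' t ≤ B) :
    ∫ t in Ioi 1, mnorm m (φ' t) ^ 2 ≤ 4 * energyBound m a μ B R := by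
  obtain ⟨g, -, -, hpos, hle⟩ := h.exists_integral_U_sub_add_le hμ hμm ha hR₀ hR hB
  linarith [integral_nonneg_of_ae hpos]

lemma HasFiniteAction.lintegral_potE_le (hμ : 0 < μ) (hμm : ∀ i, μ ≤ m i)
    (ha : ¬ collision a) (hR₀ : 0 ≤ R) (hR : ∀ i j, ‖x i - x j - (a i - a j)‖ ≤ R)
    (h : HasFiniteAction m a x φ φ') (hB : ∫ t in Ioi 1, hypIntegrand m a x φ φ' t ≤ B)
    {s t : ℝ} (hs : 1 ≤ s) (hst : s ≤ t) :
    ∫⁻ u in Ioc s t, potE m (hypCurve a x φ u) ≤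
      ENNReal.ofReal (energyBound m a μ B R + (t - s) * U m a) := by
  have hm : ∀ i, 0 < m i := fun i => hμ.trans_le (hμm i)
  obtain ⟨g, hg, hgint, hpos, hle⟩ := h.exists_integral_U_sub_add_le hμ hμm ha hR₀ hR hB
  have hsum := h.integrableOn_U_sub.fun_add hgint
  have hsub := Ioc_subset_Ioi_of_le hs t
  have hconst : IntegrableOn (fun _ : ℝ => U m a) (Ioc s t) := integrableOn_const (by simp)
  rw [h.lintegral_potE_eq hm hs]
  refine ENNReal.ofReal_le_ofReal ?_
  calc ∫ u in Ioc s t, U m (hypCurve a x φ u)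
      ≤ ∫ u in Ioc s t, (U m (hypCurve a x φ u) - U m (u • a) + g u + U m a) := by
        refine setIntegral_mono_on (h.integrableOn_U hs t) ((hsum.mono_set hsub).add hconst)
          measurableSet_Ioc fun u hu => ?_
        have hdecay : U m (u • a) ≤ U m a := by
          rw [U_smul m a (one_pos.trans (hsub hu))]
          exact mul_le_of_le_one_left (U_nonneg hm a) (inv_le_one_of_one_le₀ (hsub hu).out.le)
        linarith [hg u (hsub hu)]
    _ = (∫ u in Ioc s t, (U m (hypCurve a x φ u) - U m (u • a) + g u)) + (t - s) * U m a := by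
        rw [integral_add (hsum.mono_set hsub) hconst, setIntegral_const,
          Real.volume_real_Ioc_of_le hst, smul_eq_mul]
    _ ≤ energyBound m a μ B R + (t - s) * U m a := by
        gcongr
        have hkin : 0 ≤ ∫ u in Ioi 1, mnorm m (φ' u) ^ 2 := integral_nonneg fun _ => sq_nonneg _
        linarith [setIntegral_mono_set hsum hpos hsub.eventuallyLE]

end Energy

section Competitor

variable {m : Fin N → ℝ} {a x : Conf d N} {φ φ' : ℝ → Conf d N} {b K : ℝ}

lemma measurable_U (m : Fin N → ℝ) : Measurable (U m : Conf d N → ℝ) := by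
  refine Finset.measurable_sum _ fun i _ => Finset.measurable_sum _ fun j _ => ?_
  split_ifs
  · fun_prop
  · exact measurable_const

lemma abs_U_sub_U_smul_le (hm : ∀ i, 0 < m i) (ha : ¬ collision a) {t : ℝ} (hb : 0 < b)
    (ht : 0 < t) (hx : ∀ i j, i ≠ j → b * t ≤ ‖x i - x j‖)
    (hK : ∀ i j, ‖x i - x j - t • (a i - a j)‖ ≤ K) :
    |U m x - U m (t • a)| ≤ K / b * U m a * t ^ (-2 : ℝ) := by
  rw [Real.rpow_neg ht.le, Real.rpow_two]
  simp only [U, Finset.mul_sum, Finset.sum_mul, ← Finset.sum_sub_distrib]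
  refine (Finset.abs_sum_le_sum_abs _ _).trans (Finset.sum_le_sum fun i _ => ?_)
  refine (Finset.abs_sum_le_sum_abs _ _).trans (Finset.sum_le_sum fun j _ => ?_)
  split_ifs with hij
  · have hmm := mul_pos (hm i) (hm j)
    have haij := norm_sub_pos_of_not_collision ha hij.ne
    have hbt : 0 < b * t := mul_pos hb ht
    have hxij := hbt.trans_le (hx i j hij.ne)
    have hgap : |t * ‖a i - a j‖ - ‖x i - x j‖| ≤ K := by
      have hnorm : ‖t • (a i - a j)‖ = t * ‖a i - a j‖ := norm_smul_of_nonneg ht.le _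
      rw [← hnorm, abs_sub_comm]
      exact (abs_norm_sub_norm_le _ _).trans (hK i j)
    have hK₀ : 0 ≤ K := (abs_nonneg _).trans hgap
    have hquot : m i * m j / ‖x i - x j‖ - m i * m j / (t * ‖a i - a j‖) =
        m i * m j * (t * ‖a i - a j‖ - ‖x i - x j‖) / (‖x i - x j‖ * (t * ‖a i - a j‖)) := by
      field_simp
    rw [norm_smul_apply_sub a ht, hquot, abs_div, abs_mul, abs_of_pos hmm,
      abs_of_pos (by positivity : 0 < _ * (t * _))]
    calc m i * m j * |t * ‖a i - a j‖ - ‖x i - x j‖| / (‖x i - x j‖ * (t * ‖a i - a j‖))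
        ≤ m i * m j * K / (b * t * (t * ‖a i - a j‖)) := by
          gcongr
          exact hx i j hij.ne
      _ = K / b * (m i * m j / ‖a i - a j‖) * (t ^ 2)⁻¹ := by field_simp
  · simp only [sub_self, abs_zero, mul_zero, zero_mul, le_refl]

lemma InD.hasFiniteAction_of_forall_mul_le_norm (hm : ∀ i, 0 < m i) (ha : ¬ collision a)
    (h : InD m 1 ⊤ φ φ') (hb : 0 < b)
    (hgrowth : ∀ t, 1 ≤ t → ∀ i j, i ≠ j → b * t ≤ ‖hypCurve a x φ t i - hypCurve a x φ t j‖)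
    (hK : ∀ t, 1 ≤ t → ∀ i j,
      ‖hypCurve a x φ t i - hypCurve a x φ t j - t • (a i - a j)‖ ≤ K) :
    HasFiniteAction m a x φ φ' ∧ ∫ t in Ioi 1, hypIntegrand m a x φ φ' t ≤
      (∫ t in Ioi 1, mnorm m (φ' t) ^ 2) / 2 + K / b * U m a := by
  set V : ℝ → ℝ := fun t => U m (hypCurve a x φ t) - U m (t • a)
  have hVle : ∀ t ∈ Ioi (1 : ℝ), |V t| ≤ K / b * U m a * t ^ (-2 : ℝ) := fun t ht =>
    abs_U_sub_U_smul_le hm ha hb (one_pos.trans ht) (hgrowth t ht.out.le) (hK t ht.out.le)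
  have hpow : IntegrableOn (fun t : ℝ => K / b * U m a * t ^ (-2 : ℝ)) (Ioi 1) :=
    (integrableOn_Ioi_rpow_of_lt (by norm_num) one_pos).const_mul _
  have hpowint : ∫ t in Ioi (1 : ℝ), K / b * U m a * t ^ (-2 : ℝ) = K / b * U m a := by
    rw [integral_const_mul, integral_Ioi_rpow_of_lt (by norm_num) one_pos]
    norm_num
  have hVmeas : AEStronglyMeasurable V (volume.restrict (Ioi 1)) :=
    (((measurable_U m).comp_aemeasurable (((h.continuousOn_hypCurve a x).mono
      Ioi_subset_Ici_self).aemeasurable measurableSet_Ioi)).sub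
      ((measurable_U m).comp (measurable_id.smul_const a)).aemeasurable).aestronglyMeasurable
  have hV : IntegrableOn V (Ioi 1) :=
    hpow.mono' hVmeas ((ae_restrict_mem measurableSet_Ioi).mono hVle)
  have hsq := h.integrableOn_sq.div_const 2
  have hint : hypIntegrand m a x φ φ' = fun t => mnorm m (φ' t) ^ 2 / 2 + V t :=
    funext fun t => by simp only [hypIntegrand, V]; ring
  refine ⟨⟨h, hint ▸ hsq.fun_add hV, ?_⟩, ?_⟩
  · filter_upwards [ae_restrict_mem measurableSet_Ioi] with t ht
    rintro ⟨i, j, hij, heq⟩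
    have hpos := (mul_pos hb (one_pos.trans ht.out)).trans_le (hgrowth t ht.out.le i j hij)
    rw [heq, sub_self, norm_zero] at hpos
    exact hpos.false
  · rw [hint, integral_add hsq hV, integral_div, ← hpowint]
    exact add_le_add_right (setIntegral_mono_on hV hpow measurableSet_Ioi fun t ht =>
      (le_abs_self _).trans (hVle t ht)) _

lemma exists_injective_centred (hm : ∀ i, 0 < m i) :
    ∃ c : Fin N → ℝ, Function.Injective c ∧ ∑ k, m k * c k = 0 := by
  rcases isEmpty_or_nonempty (Fin N) with _ | _
  · exact ⟨0, Function.injective_of_subsingleton _, Fintype.sum_empty _⟩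
  have hsum : 0 < ∑ k, m k := Finset.sum_pos (fun k _ => hm k) Finset.univ_nonempty
  refine ⟨fun k => (k : ℕ) - (∑ l, m l * (l : ℕ)) / ∑ l, m l, fun k l hkl => ?_, ?_⟩
  · exact Fin.ext (by exact_mod_cast sub_left_injective hkl)
  · simp only [mul_sub, Finset.sum_sub_distrib, ← Finset.sum_mul]
    field_simp
    ring

lemma volume_smul_add_mem_span_singleton (hd : 2 ≤ d) {c : ℝ} (hc : c ≠ 0)
    (p u : EuclideanSpace ℝ (Fin d)) :
    volume {ξ : EuclideanSpace ℝ (Fin d) | c • ξ + p ∈ Submodule.span ℝ {u}} = 0 := by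
  have hline : AffineSubspace.mk' (-(c⁻¹ • p)) (Submodule.span ℝ {u}) ≠ ⊤ := fun htop => by
    have hdir := congrArg AffineSubspace.direction htop
    rw [AffineSubspace.direction_mk', AffineSubspace.direction_top] at hdir
    have hrank := finrank_span_le_card (R := ℝ) ({u} : Set (EuclideanSpace ℝ (Fin d)))
    rw [Set.toFinset_singleton, Finset.card_singleton, hdir, finrank_top,
      finrank_euclideanSpace_fin] at hrank
    omega
  refine measure_mono_null (fun ξ hξ => ?_) (Measure.addHaar_affineSubspace volume _ hline)
  have hscaled := Submodule.smul_mem _ c⁻¹ (show c • ξ + p ∈ Submodule.span ℝ {u} from hξ)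
  rw [smul_add, inv_smul_smul₀ hc] at hscaled
  simpa [AffineSubspace.mem_mk'] using hscaled

lemma exists_forall_notMem_span (hd : 2 ≤ d) {c : Fin N → ℝ} (hc : Function.Injective c)
    (x y : Conf d N) : ∃ ξ : EuclideanSpace ℝ (Fin d), ∀ i j, i ≠ j →
      (c i - c j) • ξ + (x i - x j) ∉ Submodule.span ℝ {y i - y j} ∧
      (c i - c j) • ξ + (y i - y j) ∉ Submodule.span ℝ {x i - x j} := by
  have hae : ∀ᵐ ξ : EuclideanSpace ℝ (Fin d), ∀ i j, i ≠ j →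
      (c i - c j) • ξ + (x i - x j) ∉ Submodule.span ℝ {y i - y j} ∧
      (c i - c j) • ξ + (y i - y j) ∉ Submodule.span ℝ {x i - x j} := by
    simp only [ae_all_iff, eventually_and]
    intro i j hij
    have hcij : c i - c j ≠ 0 := sub_ne_zero.2 (hc.ne hij)
    exact ⟨measure_eq_zero_iff_ae_notMem.1 (volume_smul_add_mem_span_singleton hd hcij _ _),
      measure_eq_zero_iff_ae_notMem.1 (volume_smul_add_mem_span_singleton hd hcij _ _)⟩
  exact hae.exists

lemma add_smul_add_ramp_smul_ne_zero {V : Type*} [AddCommGroup V] [Module ℝ V] {u v w : V}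
    (hu : u ≠ 0) (hwv : w + v ∉ Submodule.span ℝ {u}) (hwu : w + u ∉ Submodule.span ℝ {v})
    {t : ℝ} (ht : 1 ≤ t) : u + (t - 1) • v + ramp 1 2 t • w ≠ 0 := by
  intro hzero
  rcases le_total t 2 with ht₂ | ht₂
  · rw [ramp_of_mem_Icc ⟨ht, ht₂⟩] at hzero
    rcases ht.eq_or_lt with rfl | ht₁
    · exact hu (by simpa using hzero)
    · have hu' : u = -(t - 1) • (w + v) := by
        rw [neg_smul, eq_neg_iff_add_eq_zero, ← hzero]
        module
      rw [hu', Submodule.span_singleton_smul_eq (neg_ne_zero.2 (sub_pos.2 ht₁).ne').isUnit] at hwv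
      exact hwv (Submodule.mem_span_singleton_self _)
  · rw [ramp_of_ge one_le_two ht₂] at hzero
    refine hwu (Submodule.mem_span_singleton.2 ⟨-(t - 1), ?_⟩)
    rw [neg_smul, neg_eq_iff_add_eq_zero, ← hzero]
    module

lemma exists_mul_le_norm_of_norm_sub_smul_le {V : Type*} [NormedAddCommGroup V]
    [NormedSpace ℝ V] {f : ℝ → V} {u : V} {t₀ : ℝ} (ht₀ : 0 < t₀) (hf : ContinuousOn f (Ici t₀))
    (hf₀ : ∀ t, t₀ ≤ t → f t ≠ 0) (hu : u ≠ 0) (hK : ∀ t, t₀ ≤ t → ‖f t - t • u‖ ≤ K) :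
    ∃ b > 0, ∀ t, t₀ ≤ t → b * t ≤ ‖f t‖ := by
  have hu' : 0 < ‖u‖ := norm_pos_iff.2 hu
  set T := max t₀ (2 * K / ‖u‖)
  have hT : t₀ ≤ T := le_max_left _ _
  have hTpos : 0 < T := ht₀.trans_le hT
  obtain ⟨s, hs, hmin⟩ := isCompact_Icc.exists_isMinOn (nonempty_Icc.2 hT)
    (hf.norm.mono Icc_subset_Ici_self)
  have hfs : 0 < ‖f s‖ := norm_pos_iff.2 (hf₀ s hs.1)
  refine ⟨min (‖u‖ / 2) (‖f s‖ / T), by positivity, fun t ht => ?_⟩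
  have htpos : 0 < t := ht₀.trans_le ht
  rcases le_total t T with htT | htT
  · calc min (‖u‖ / 2) (‖f s‖ / T) * t ≤ ‖f s‖ / T * T := by gcongr; exact min_le_right _ _
      _ = ‖f s‖ := div_mul_cancel₀ _ hTpos.ne'
      _ ≤ ‖f t‖ := hmin ⟨ht, htT⟩
  · have hKt : 2 * K ≤ t * ‖u‖ := (div_le_iff₀ hu').1 ((le_max_right _ _).trans htT)
    have hgrowth : t * ‖u‖ - ‖f t‖ ≤ K := by
      rw [← norm_smul_of_nonneg htpos.le]
      exact (norm_sub_norm_le _ _).trans ((norm_sub_rev _ _).trans_le (hK t ht))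
    have hslope : min (‖u‖ / 2) (‖f s‖ / T) * t ≤ ‖u‖ / 2 * t := by
      gcongr
      exact min_le_left _ _
    linarith

lemma norm_apply_sub_apply_le (x : Conf d N) (i j : Fin N) : ‖x i - x j‖ ≤ 2 * ‖x‖ := by
  rw [two_mul]
  exact (norm_sub_le _ _).trans (add_le_add (norm_le_pi_norm x i) (norm_le_pi_norm x j))

lemma norm_hypCurve_sub_sub_smul_le (a x : Conf d N) (φ : ℝ → Conf d N) (t : ℝ)
    (i j : Fin N) : ‖hypCurve a x φ t i - hypCurve a x φ t j - t • (a i - a j)‖ ≤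
      2 * (‖φ t‖ + ‖x - a‖) := by
  have hsplit : hypCurve a x φ t i - hypCurve a x φ t j - t • (a i - a j) =
      (φ t + (x - a)) i - (φ t + (x - a)) j := by
    simp only [hypCurve, Pi.add_apply, Pi.sub_apply, Pi.smul_apply]
    module
  rw [hsplit]
  refine (norm_apply_sub_apply_le _ i j).trans ?_
  gcongr
  exact norm_add_le _ _

lemma exists_inD_forall_mul_le_norm (hd : 2 ≤ d) (hm : ∀ i, 0 < m i) (ha : ¬ collision a)
    (hx : ¬ collision x) : ∃ φ φ' : ℝ → Conf d N, InD m 1 ⊤ φ φ' ∧ ∃ b > 0, ∃ K,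
      ∀ t, 1 ≤ t → ∀ i j,
        (i ≠ j → b * t ≤ ‖hypCurve a x φ t i - hypCurve a x φ t j‖) ∧
        ‖hypCurve a x φ t i - hypCurve a x φ t j - t • (a i - a j)‖ ≤ K := by
  obtain ⟨c, hcinj, hc⟩ := exists_injective_centred hm
  obtain ⟨ξ, hξ⟩ := exists_forall_notMem_span hd hcinj a x
  set w : Conf d N := lineConf c ξ
  have hInD := inD_ramp_smul (inX_lineConf hc ξ) (le_refl 1) 2
  refine ⟨_, _, hInD, ?_⟩
  set φ : ℝ → Conf d N := fun t => ramp 1 2 t • w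
  have hrel : ∀ t i j, hypCurve a x φ t i - hypCurve a x φ t j =
      (x i - x j) + (t - 1) • (a i - a j) + ramp 1 2 t • (c i - c j) • ξ := fun t i j => by
    simp only [hypCurve, φ, w, lineConf, Pi.add_apply, Pi.sub_apply, Pi.smul_apply]
    module
  have hK : ∀ t i j, ‖hypCurve a x φ t i - hypCurve a x φ t j - t • (a i - a j)‖ ≤
      2 * (‖w‖ + ‖x - a‖) := fun t i j => by
    have hramp : ‖ramp 1 2 t‖ ≤ 1 := by
      rw [ramp, Real.norm_of_nonneg (le_max_left _ _)]
      exact max_le zero_le_one (by linarith [min_le_right t 2])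
    refine (norm_hypCurve_sub_sub_smul_le a x φ t i j).trans ?_
    gcongr
    exact (norm_smul_le _ _).trans (mul_le_of_le_one_left (norm_nonneg w) hramp)
  have hgrowth : ∀ p : {p : Fin N × Fin N // p.1 ≠ p.2}, ∃ b > 0, ∀ t, 1 ≤ t →
      b * t ≤ ‖hypCurve a x φ t p.1.1 - hypCurve a x φ t p.1.2‖ := fun ⟨(i, j), hij⟩ => by
    refine exists_mul_le_norm_of_norm_sub_smul_le one_pos ?_ (fun t ht => ?_)
      (sub_ne_zero.2 fun h => ha ⟨i, j, hij, h⟩) fun t _ => hK t i j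
    · have hcont := continuousOn_pi.1 (hInD.continuousOn_hypCurve a x)
      exact (hcont i).sub (hcont j)
    · rw [hrel]
      exact add_smul_add_ramp_smul_ne_zero (sub_ne_zero.2 fun h => hx ⟨i, j, hij, h⟩)
        (hξ i j hij).1 (hξ i j hij).2 ht
  choose b hb hbt using hgrowth
  obtain ⟨b₀, hb₀, hle⟩ := exists_pos_forall_le hb
  refine ⟨b₀, hb₀, _, fun t ht i j => ⟨fun hij => le_trans ?_ (hbt ⟨(i, j), hij⟩ t ht), hK t i j⟩⟩
  gcongr
  exact hle _

lemma exists_hasFiniteAction_of_norm_sub_le (hd : 2 ≤ d) (hm : ∀ i, 0 < m i)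
    (ha : ¬ collision a) (hx : ¬ collision x) : ∃ B, ∃ ρ > 0, ∀ y : Conf d N, ‖y - x‖ ≤ ρ →
      ∃ φ φ', HasFiniteAction m a y φ φ' ∧ ∫ t in Ioi 1, hypIntegrand m a y φ φ' t ≤ B := by
  obtain ⟨φ, φ', h, b, hb, K, hφ⟩ := exists_inD_forall_mul_le_norm hd hm ha hx
  refine ⟨_, b / 4, by positivity, fun y hy => ⟨φ, φ',
    h.hasFiniteAction_of_forall_mul_le_norm hm ha (half_pos hb) (K := K + b / 2)
      (fun t ht i j hij => ?_) fun t ht i j => ?_⟩⟩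
  all_goals
    have hrel : hypCurve a y φ t i - hypCurve a y φ t j =
        hypCurve a x φ t i - hypCurve a x φ t j + ((y - x) i - (y - x) j) := by
      simp only [hypCurve, Pi.add_apply, Pi.sub_apply, Pi.smul_apply]
      module
    have hyx : ‖(y - x) i - (y - x) j‖ ≤ b / 2 :=
      (norm_apply_sub_apply_le _ i j).trans (by linarith)
    rw [hrel]
  · have := (hφ t ht i j).1 hij
    have := norm_sub_le_norm_add (hypCurve a x φ t i - hypCurve a x φ t j)
      ((y - x) i - (y - x) j)
    have : b / 2 ≤ b / 2 * t := le_mul_of_one_le_right (by positivity) ht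
    linarith
  · rw [add_sub_right_comm]
    exact (norm_add_le _ _).trans (add_le_add (hφ t ht i j).2 hyx)

end Competitor

section UniformSeparation

variable {m : Fin N → ℝ} {a : Conf d N} {μ R c : ℝ} {i j : Fin N}

lemma exists_pos_le_norm_hypCurve_sub (hd : 2 ≤ d) (hμ : 0 < μ) (hμm : ∀ i, μ ≤ m i)
    (ha : ¬ collision a) (hR₀ : 0 ≤ R) (hc : 0 < c) (B : ℝ) (hij : i ≠ j) :
    ∃ ε > 0, ∀ (x : Conf d N) (φ φ' : ℝ → Conf d N), IsFiniteMinimizer m a x φ φ' →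
      ∫ t in Ioi 1, hypIntegrand m a x φ φ' t ≤ B →
      (∀ k l, ‖x k - x l - (a k - a l)‖ ≤ R) → c ≤ ‖x i - x j‖ →
      ∀ t, 1 ≤ t → ε ≤ ‖hypCurve a x φ t i - hypCurve a x φ t j‖ := by
  set E := 4 * energyBound m a μ B R
  obtain ⟨τ, hτc, hτ⟩ : ∃ τ, τ * (4 / μ * E + 2 * ‖a i - a j‖ ^ 2 * τ) < (c / 2) ^ 2 ∧ 0 < τ := by
    have hlim : Tendsto (fun τ => τ * (4 / μ * E + 2 * ‖a i - a j‖ ^ 2 * τ)) (𝓝 0) (𝓝 0) :=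
      Continuous.tendsto' (by fun_prop) 0 0 (zero_mul _)
    exact (((hlim.eventually_lt_const (by positivity)).filter_mono nhdsWithin_le_nhds).and
      (self_mem_nhdsWithin : Ioi (0 : ℝ) ∈ _)).exists
  set M := energyBound m a μ B R + (2 * τ) * U m a
  obtain ⟨ε, hε, hlate⟩ := exists_pos_le_norm_sub_of_isFiniteMinimizer hd hμ hμm a hij hτ
    (le_max_right E 0) (le_max_right M 0)
  refine ⟨min (c / 2) ε, by positivity, fun x φ φ' h hB hR hx t ht => ?_⟩
  have hE := h.integral_mnorm_sq_le hμ hμm ha hR₀ hR hB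
  rcases le_total t (1 + τ) with htτ | htτ
  · exact (min_le_left _ _).trans
      (h.inD.half_le_norm_hypCurve_sub hμ hμm hE hc.le hx hτc.le ht htτ)
  · have hpot := h.lintegral_potE_le hμ hμm ha hR₀ hR hB (by linarith : 1 ≤ t - τ)
      (by linarith : t - τ ≤ t + τ)
    have hM : energyBound m a μ B R + (t + τ - (t - τ)) * U m a = M := by ring
    rw [hM] at hpot
    exact (min_le_right _ _).trans (hlate x φ φ' h (hE.trans (le_max_left _ _)) t (by linarith)
      (hpot.trans (ENNReal.ofReal_le_ofReal (le_max_left _ _))))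

lemma exists_pos_le_mnorm_hypCurve_sub (hd : 2 ≤ d) (hm : ∀ i, 0 < m i)
    (ha : ¬ collision a) (hR₀ : 0 ≤ R) (hc : 0 < c) (B : ℝ) :
    ∃ C > 0, ∀ (x : Conf d N) (φ φ' : ℝ → Conf d N), IsFiniteMinimizer m a x φ φ' →
      ∫ t in Ioi 1, hypIntegrand m a x φ φ' t ≤ B →
      (∀ k l, ‖x k - x l - (a k - a l)‖ ≤ R) → (∀ i j, i ≠ j → c ≤ ‖x i - x j‖) →
      ∀ t, 1 ≤ t → ∀ y, collision y → C ≤ mnorm m (hypCurve a x φ t - y) := by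
  obtain ⟨μ, hμ, hμm⟩ := exists_pos_forall_le hm
  have hpair (p : {p : Fin N × Fin N // p.1 ≠ p.2}) :=
    exists_pos_le_norm_hypCurve_sub hd hμ hμm ha hR₀ hc B p.2
  choose ε hε hsep using hpair
  obtain ⟨ε₀, hε₀, hle⟩ := exists_pos_forall_le hε
  refine ⟨√(μ / 2) * ε₀, by positivity, fun x φ φ' h hB hR hx t ht y hy => ?_⟩
  refine le_mnorm_sub_of_collision hμ hμm hε₀.le (fun i j hij => ?_) hy
  have hεij := hsep ⟨(i, j), hij⟩ x φ φ' h hB hR (hx i j hij) t ht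
  exact (hle ⟨(i, j), hij⟩).trans hεij
lemma exists_pos_forall_le_norm_sub {x : Conf d N} (hx : ¬ collision x) :
    ∃ c > 0, ∀ y : Conf d N, ‖y - x‖ ≤ c → ∀ i j, i ≠ j → c ≤ ‖y i - y j‖ := by
  obtain ⟨c, hc, hle⟩ := exists_pos_forall_le
    fun p : {p : Fin N × Fin N // p.1 ≠ p.2} => norm_sub_pos_of_not_collision hx p.2
  refine ⟨c / 3, by positivity, fun y hy i j hij => ?_⟩
  have hdist : ‖x i - x j‖ - ‖y i - y j‖ ≤ 2 * ‖x - y‖ :=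
    calc _ ≤ ‖x i - x j - (y i - y j)‖ := norm_sub_norm_le _ _
      _ = ‖(x - y) i - (x - y) j‖ := by rw [sub_sub_sub_comm]; rfl
      _ ≤ _ := norm_apply_sub_apply_le _ i j
  rw [norm_sub_rev x] at hdist
  linarith [hle ⟨(i, j), hij⟩]

end UniformSeparation

theorem minimizers_far_from_collisions_general (hd : 2 ≤ d) {m : Fin N → ℝ}
    (hm : ∀ i, 0 < m i) {a xbar : Conf d N} (ha : ¬ collision a) (hxbar : ¬ collision xbar) :
    ∃ 𝒰 : Set (Conf d N), IsOpen 𝒰 ∧ xbar ∈ 𝒰 ∧ (∀ y ∈ 𝒰, ¬ collision y) ∧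
      ∃ C > (0 : ℝ), ∀ x ∈ 𝒰, ∀ φ φ' : ℝ → Conf d N, InD m 1 ⊤ φ φ' →
        hypAction m a x ⊤ φ φ' = hypInf m a x ⊤ →
        ∀ t, 1 ≤ t → ∀ y, collision y → C ≤ mnorm m (hypCurve a x φ t - y) := by
  obtain ⟨c, hc, hsep⟩ := exists_pos_forall_le_norm_sub hxbar
  obtain ⟨B, ρ, hρ, hcomp⟩ := exists_hasFiniteAction_of_norm_sub_le hd hm ha hxbar
  obtain ⟨C, hC, hfar⟩ := exists_pos_le_mnorm_hypCurve_sub hd hm ha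
    (by positivity : 0 ≤ 2 * (ρ + ‖xbar - a‖)) hc B
  have hball : ∀ y ∈ Metric.ball xbar (min ρ c), ‖y - xbar‖ ≤ ρ ∧ ‖y - xbar‖ ≤ c := fun y hy =>
    le_min_iff.1 (mem_ball_iff_norm.1 hy).le
  refine ⟨Metric.ball xbar (min ρ c), Metric.isOpen_ball,
    Metric.mem_ball_self (lt_min hρ hc), fun y hy ⟨i, j, hij, heq⟩ => ?_,
    C, hC, fun x hx φ φ' h hmin => ?_⟩
  · have hpos := hc.trans_le (hsep y (hball y hy).2 i j hij)
    rw [heq, sub_self, norm_zero] at hpos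
    exact hpos.false
  · obtain ⟨ψ, ψ', hψ, hB⟩ := hcomp x (hball x hx).1
    have hφ := hψ.isFiniteMinimizer h hmin
    refine hfar x φ φ' hφ ((hφ.integral_le ψ ψ' hψ).trans hB) (fun k l => ?_)
      (hsep x (hball x hx).2)
    calc ‖x k - x l - (a k - a l)‖ = ‖(x - a) k - (x - a) l‖ := by rw [sub_sub_sub_comm]; rfl
      _ ≤ 2 * ‖x - a‖ := norm_apply_sub_apply_le _ k l
      _ ≤ 2 * (‖x - xbar‖ + ‖xbar - a‖) := by gcongr; exact norm_sub_le_norm_sub_add_norm_sub ..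
      _ ≤ 2 * (ρ + ‖xbar - a‖) := by gcongr; exact (hball x hx).1

/-- **Uniform distance of minimizing motions from collisions** : for every `x̄ ∈ Ω` there
are a (relative) open neighborhood `𝒰 ⊆ Ω` of `x̄` and a constant `C > 0` such that for
every `x ∈ 𝒰` and every minimizer `φ` of `A_x` on `D₀^{1,2}(1,+∞)`, the motion
`γ(t) = a t + φ(t) + x − a` stays at mass-distance at least `C` from the collision set `Δ`
for all `t ≥ 1`. -/
theorem minimizers_far_from_collisions {d N : ℕ} (hd : 2 ≤ d) (hN : 2 ≤ N)
    (m : Fin N → ℝ) (hm : ∀ i, 0 < m i)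
    (a : Conf d N) (ha : inOmega m a)
    (xbar : Conf d N) (hxbar : inOmega m xbar) :
    ∃ 𝒰 : Set (Conf d N), IsOpen 𝒰 ∧ xbar ∈ 𝒰 ∧
      (∀ y ∈ 𝒰, inX m y → inOmega m y) ∧
      ∃ C > (0:ℝ), ∀ x ∈ 𝒰, inX m x →
        ∀ φ φ' : ℝ → Conf d N, InD m 1 ⊤ φ φ' →
          hypAction m a x ⊤ φ φ' = hypInf m a x ⊤ →
          ∀ t : ℝ, 1 ≤ t → ∀ y : Conf d N, inX m y → collision y →
            C ≤ mnorm m (hypCurve a x φ t - y) := by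
  obtain ⟨𝒰, hopen, hmem, hfree, C, hC, hfar⟩ :=
    minimizers_far_from_collisions_general hd hm ha.2 hxbar.2
  exact ⟨𝒰, hopen, hmem, fun y hy hyX => ⟨hyX, hfree y hy⟩, C, hC,
    fun x hx _ φ φ' h hmin t ht y _ hy => hfar x hx φ φ' h hmin t ht y hy⟩

end NBodyHJ
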